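/- arXiv:1906.03062 — 2 statements merged into one kernel-verified Lean document; each statement's English description precedes it below -/
import Mathlib

section
/- Let n ≥ 2 and let τ = 2k-1+ε with k ≥ 1 an integer and ε ∈ {0,1}. Define D(n,τ) = binom(n+k-2+ε, n-1) + binom(n+k-2, n-1) (and correspondingly D(n,τ+1) for the next value of τ, using its own parity decomposition). Let N be a real number with D(n,τ) < N ≤ D(n,τ+1). Then 𝒫_τ, the space of real polynomials of degree at most τ, is a ULB-space for dimension n and cardinality N: there exist nodes -1 ≤ α_1 < ⋯ < α_{k+ε} < 1 and weights ρ_1,…,ρ_{k+ε} > 0 forming a 1/N-quadrature rule exact for 𝒫_τ, and for every function h absolutely monotone on [-1,1) there exists a polynomial f ∈ 𝒫_τ that is positive definite, satisfies f(t) ≤ h(t) for all t ∈ [-1,1), and satisfies f(α_i) = h(α_i) for i = 1,…,k+ε. -/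
open MeasureTheory Finset
open scoped Classical

/-- The (unnormalized) Gegenbauer weight `(1 - t²)^((n-3)/2)`. -/
noncomputable def gegWeight (n : ℕ) (t : ℝ) : ℝ := (1 - t ^ 2) ^ (((n : ℝ) - 3) / 2)

/-- Integration against the probability measure `μ_n` on `[-1,1]` with density
proportional to `(1 - t²)^((n-3)/2)`. -/
noncomputable def gegInt (n : ℕ) (f : ℝ → ℝ) : ℝ :=
  (∫ t in Set.Icc (-1 : ℝ) 1, gegWeight n t)⁻¹ *
    ∫ t in Set.Icc (-1 : ℝ) 1, f t * gegWeight n t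

/-- `P : ℕ → ℝ[X]` is the family of Gegenbauer polynomials for dimension `n`:
`deg P_i = i`, `P_i(1) = 1`, pairwise orthogonal in `L²(μ_n)`. -/
def IsGegenbauer (n : ℕ) (P : ℕ → Polynomial ℝ) : Prop :=
  (∀ i, (P i).natDegree = i) ∧ (∀ i, (P i).eval 1 = 1) ∧
    ∀ i j, i ≠ j → gegInt n (fun t => (P i).eval t * (P j).eval t) = 0

/-- A `1/N`-quadrature rule with nodes `α` and weights `ρ`, exact for a set `Λ`
of functions on `[-1,1]`. -/
def IsQuadratureRule (n : ℕ) (N : ℝ) {k : ℕ} (α ρ : Fin k → ℝ)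
    (Λ : Set (ℝ → ℝ)) : Prop :=
  (∀ i, -1 ≤ α i) ∧ (∀ i, α i < 1) ∧ StrictMono α ∧ (∀ i, 0 < ρ i) ∧
    ∀ f ∈ Λ, gegInt n f = f 1 / N + ∑ i, ρ i * f (α i)

/-- `h` is absolutely monotone on `[-1,1)`: infinitely differentiable there with all
derivatives (including `h` itself) nonnegative. -/
def AbsMonOn (h : ℝ → ℝ) : Prop :=
  ContDiffOn ℝ (⊤ : ℕ∞) h (Set.Ico (-1 : ℝ) 1) ∧
    ∀ (m : ℕ), ∀ t ∈ Set.Ico (-1 : ℝ) 1,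
      0 ≤ iteratedDerivWithin m h (Set.Ico (-1 : ℝ) 1) t

/-- The space `𝒫_m` of real polynomials of degree at most `m`, as functions on `ℝ`. -/
def polySpace (m : ℕ) : Set (ℝ → ℝ) :=
  {f | ∃ p : Polynomial ℝ, p.natDegree ≤ m ∧ f = fun t => p.eval t}

/-- The Delsarte–Goethals–Seidel bound `D(n,τ)`; for odd `τ = 2k-1` it equals
`2·C(n+k-2, n-1)`, and for even `τ = 2k` it equals `C(n+k-1, n-1) + C(n+k-2, n-1)`. -/
def DGS (n τ : ℕ) : ℕ :=
  if τ % 2 = 1 then 2 * Nat.choose (n + (τ + 1) / 2 - 2) (n - 1)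
  else Nat.choose (n + τ / 2 - 1) (n - 1) + Nat.choose (n + τ / 2 - 2) (n - 1)

/-!
A `1/N`-quadrature rule exact for `𝒫_τ` is a Gauss (`ε = 0`) or Radau (`ε = 1`, with the fixed node
`-1`) rule for the residual functional `f ↦ ∫ f dμ_n - f(1)/N`. It has nodes in `[-1, 1)` and
positive weights because this functional, or its product with `1 + t`, is positive definite in low
degree: reproducing kernels at `1` reduce this to `D(n,τ) < N`.

By Bernstein's theorem `h` expands around `-1` in a power series with nonnegative coefficients, and
subtracting its value at a node and dividing by `t - α_i` preserves this property. Newton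
interpolation with double nodes (a simple one at `-1`) therefore gives `h - f` as a nonnegative
function times a polynomial that is nonnegative on `[-1, 1)`, with `f` a nonnegative combination of
products of two prefixes `(t - α_1) ⋯ (t - α_j)` of the nodal polynomial. Products of Gegenbauer
polynomials are nonnegative combinations of Gegenbauer polynomials, so it remains to expand the
prefixes. This is the argument of Cohn and Kumar, for the rule with the node `1` added if `ε = 0`
and for that rule multiplied by `1 - t²` if `ε = 1`; in the second case the full nodal polynomial
needs the upper bound on `N` as well.
-/

open Polynomial

theorem natDegree_le_iff_degree_lt_succ {R : Type*} [Semiring R] {f : R[X]} {n : ℕ} :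
    f.natDegree ≤ n ↔ f.degree < (n + 1 : ℕ) :=
  natDegree_le_iff_coeff_eq_zero.trans (degree_lt_iff_coeff_zero f (n + 1)).symm

section StrictlyPositive

variable {L : ℝ[X] →ₗ[ℝ] ℝ} {k : ℕ}

/-- The functional `L` is positive definite on the polynomials of degree less than `k`. -/
def StrictlyPositive (L : ℝ[X] →ₗ[ℝ] ℝ) (k : ℕ) : Prop :=
  ∀ p : ℝ[X], p ≠ 0 → p.degree < k → 0 < L (p * p)

/-- The functional `f ↦ L (w f)`: if `L` is integration against a measure `μ`, this is
integration against `w μ`. -/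
noncomputable def mulFunctional (w : ℝ[X]) (L : ℝ[X] →ₗ[ℝ] ℝ) : ℝ[X] →ₗ[ℝ] ℝ :=
  L ∘ₗ LinearMap.mulLeft ℝ w

@[simp]
theorem mulFunctional_apply (w f : ℝ[X]) (L : ℝ[X] →ₗ[ℝ] ℝ) :
    mulFunctional w L f = L (w * f) := rfl

theorem StrictlyPositive.mono {l : ℕ} (hL : StrictlyPositive L k) (hl : l ≤ k) :
    StrictlyPositive L l :=
  fun p hp hd => hL p hp (hd.trans_le (by exact_mod_cast hl))

theorem StrictlyPositive.apply_mul_self_nonneg (hL : StrictlyPositive L k) {p : ℝ[X]}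
    (hp : p.degree < k) : 0 ≤ L (p * p) := by
  rcases eq_or_ne p 0 with rfl | h
  · simp
  · exact (hL p h hp).le

theorem map_C_mul (L : ℝ[X] →ₗ[ℝ] ℝ) (c : ℝ) (f : ℝ[X]) : L (C c * f) = c * L f := by
  rw [← smul_eq_C_mul, map_smul, smul_eq_mul]

theorem map_X_sub_C_mul (L : ℝ[X] →ₗ[ℝ] ℝ) (c : ℝ) (f : ℝ[X]) :
    L ((X - C c) * f) = L (X * f) - c * L f := by
  rw [sub_mul, map_sub, map_C_mul]

theorem map_C_sub_X_mul (L : ℝ[X] →ₗ[ℝ] ℝ) (c : ℝ) (f : ℝ[X]) :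
    L ((C c - X) * f) = c * L f - L (X * f) := by
  rw [← neg_sub X (C c), neg_mul, map_neg, map_X_sub_C_mul, neg_sub]

theorem strictlyPositive_of_endpoints {a b : ℝ} (hab : a < b)
    (ha : StrictlyPositive (mulFunctional (X - C a) L) k)
    (hb : StrictlyPositive (mulFunctional (C b - X) L) k) : StrictlyPositive L k := by
  intro p hp hd
  have h₁ := ha p hp hd
  have h₂ := hb p hp hd
  rw [mulFunctional_apply, map_X_sub_C_mul] at h₁
  rw [mulFunctional_apply, map_C_sub_X_mul] at h₂
  exact pos_of_mul_pos_right (a := b - a) (by linarith) (sub_pos.2 hab).le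

end StrictlyPositive

section Gauss

variable {L : ℝ[X] →ₗ[ℝ] ℝ} {q : ℝ[X]}

/-- `q` is the monic orthogonal polynomial of degree `natDegree q` for the functional `L`. -/
structure IsMonicOrthogonal (L : ℝ[X] →ₗ[ℝ] ℝ) (q : ℝ[X]) : Prop where
  monic : q.Monic
  orthogonal : ∀ r : ℝ[X], r.degree < q.natDegree → L (q * r) = 0

theorem StrictlyPositive.exists_isMonicOrthogonal {k : ℕ} (hL : StrictlyPositive L k) :
    ∃ q : ℝ[X], q.natDegree = k ∧ IsMonicOrthogonal L q := by
  let B : degreeLT ℝ k →ₗ[ℝ] Module.Dual ℝ (degreeLT ℝ k) :=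
    LinearMap.mk₂ ℝ (fun p r => L (p.1 * r.1)) (by simp [add_mul]) (by simp) (by simp [mul_add])
      (by simp)
  have hB : Function.Injective B := by
    rw [injective_iff_map_eq_zero]
    intro p hp
    by_contra hne
    have hpos := hL p.1 (fun h => hne (Subtype.ext h)) (mem_degreeLT.1 p.2)
    exact hpos.ne' (LinearMap.congr_fun hp p)
  have : FiniteDimensional ℝ (degreeLT ℝ k) := Module.Finite.equiv (degreeLTEquiv ℝ k).symm
  obtain ⟨p, hp⟩ := (LinearMap.injective_iff_surjective_of_finrank_eq_finrank
    Subspace.dual_finrank_eq.symm).1 hB (mulFunctional (X ^ k) L ∘ₗ (degreeLT ℝ k).subtype)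
  have hpd : p.1.degree < k := mem_degreeLT.1 p.2
  have hd : (X ^ k - p.1).natDegree = k := natDegree_eq_of_degree_eq_some <| by
    rw [degree_sub_eq_left_of_degree_lt (by rwa [degree_X_pow]), degree_X_pow]
  refine ⟨X ^ k - p.1, hd, ?_, fun r hr => ?_⟩
  · rw [sub_eq_add_neg]
    exact monic_X_pow_add (by rwa [degree_neg])
  · have h := LinearMap.congr_fun hp ⟨r, mem_degreeLT.2 (hd ▸ hr)⟩
    rw [sub_mul, map_sub, sub_eq_zero]
    exact h.symm

theorem IsMonicOrthogonal.apply_factor_mul_sq (hq : IsMonicOrthogonal L q) {s v : ℝ[X]}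
    (hs : 0 < s.natDegree) (h : q = s * v) :
    v ≠ 0 ∧ v.natDegree + s.natDegree = q.natDegree ∧ L (s * (v * v)) = 0 := by
  have hv : v ≠ 0 := right_ne_zero_of_mul (h ▸ hq.monic.ne_zero)
  have hs₀ : s ≠ 0 := left_ne_zero_of_mul (h ▸ hq.monic.ne_zero)
  have hd : v.natDegree + s.natDegree = q.natDegree := by rw [h, natDegree_mul hs₀ hv, add_comm]
  refine ⟨hv, hd, ?_⟩
  rw [← mul_assoc, ← h]
  exact hq.orthogonal v ((natDegree_lt_iff_degree_lt hv).1 (by omega))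

theorem IsMonicOrthogonal.not_sq_add_sq_dvd (hq : IsMonicOrthogonal L q)
    (hL : StrictlyPositive L q.natDegree) (α β : ℝ) : ¬ (X - C α) ^ 2 + C (β ^ 2) ∣ q := by
  rintro ⟨v, hv⟩
  have hdeg : ((X - C α) ^ 2 + C (β ^ 2)).natDegree = 2 := by compute_degree!
  obtain ⟨hv₀, hd, h⟩ := hq.apply_factor_mul_sq (by rw [hdeg]; norm_num) hv
  have hne : (X - C α) * v ≠ 0 := mul_ne_zero (X_sub_C_ne_zero α) hv₀
  have h₁ : 0 < L ((X - C α) * v * ((X - C α) * v)) :=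
    hL _ hne <| (natDegree_lt_iff_degree_lt hne).1 <| by
      rw [natDegree_mul (X_sub_C_ne_zero α) hv₀, natDegree_X_sub_C]; omega
  have h₂ : 0 ≤ L (v * v) :=
    (hL v hv₀ ((natDegree_lt_iff_degree_lt hv₀).1 (by omega))).le
  have h₃ : ((X - C α) ^ 2 + C (β ^ 2)) * (v * v) =
      (X - C α) * v * ((X - C α) * v) + β ^ 2 • (v * v) := by rw [smul_eq_C_mul]; ring
  rw [h₃, map_add, map_smul, smul_eq_mul] at h
  linarith [mul_nonneg (sq_nonneg β) h₂]

theorem IsMonicOrthogonal.mem_Ioo_of_isRoot {a b x : ℝ} (hq : IsMonicOrthogonal L q)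
    (ha : StrictlyPositive (mulFunctional (X - C a) L) q.natDegree)
    (hb : StrictlyPositive (mulFunctional (C b - X) L) q.natDegree)
    (hL : StrictlyPositive L q.natDegree) (hx : q.IsRoot x) : x ∈ Set.Ioo a b := by
  obtain ⟨v, hv⟩ := dvd_iff_isRoot.2 hx
  obtain ⟨hv₀, hd, h⟩ := hq.apply_factor_mul_sq (by simp) hv
  rw [natDegree_X_sub_C] at hd
  have hvd : v.degree < q.natDegree := (natDegree_lt_iff_degree_lt hv₀).1 (by omega)
  have h₀ := hL v hv₀ hvd
  have h₁ := ha v hv₀ hvd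
  have h₂ := hb v hv₀ hvd
  rw [mulFunctional_apply, map_X_sub_C_mul] at h₁
  rw [mulFunctional_apply, map_C_sub_X_mul] at h₂
  rw [map_X_sub_C_mul, sub_eq_zero] at h
  rw [h, ← sub_mul] at h₁ h₂
  exact ⟨sub_pos.1 (pos_of_mul_pos_left h₁ h₀.le), sub_pos.1 (pos_of_mul_pos_left h₂ h₀.le)⟩

theorem IsMonicOrthogonal.splits (hq : IsMonicOrthogonal L q)
    (hL : StrictlyPositive L q.natDegree) : q.Splits := by
  refine .of_splits_map (algebraMap ℝ ℂ) (IsAlgClosed.splits _) fun z hz => ?_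
  have hz : aeval z q = 0 := (mem_roots'.1 hz).2 ▸ aeval_def z q ▸ (eval_map ..).symm
  by_contra hreal
  have him : z.im ≠ 0 := fun h => hreal ⟨z.re, Complex.ext rfl h.symm⟩
  refine hq.not_sq_add_sq_dvd hL z.re z.im ?_
  convert quadratic_dvd_of_aeval_eq_zero_im_ne_zero q hz him using 1
  rw [Complex.sq_norm, Complex.normSq_apply]
  simp only [map_add, map_mul, map_pow, map_ofNat]
  ring

theorem IsMonicOrthogonal.nodup_roots (hq : IsMonicOrthogonal L q)
    (hL : StrictlyPositive L q.natDegree) : q.roots.Nodup := by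
  refine Multiset.nodup_iff_count_le_one.2 fun x => not_lt.1 fun hx => ?_
  rw [count_roots] at hx
  apply hq.not_sq_add_sq_dvd hL x 0
  simpa using (le_rootMultiplicity_iff hq.monic.ne_zero).1 hx

theorem IsMonicOrthogonal.eq_nodal (hq : IsMonicOrthogonal L q)
    (hL : StrictlyPositive L q.natDegree) : q = Lagrange.nodal q.roots.toFinset id := by
  conv_lhs => rw [(hq.splits hL).eq_prod_roots_of_monic hq.monic]
  rw [Lagrange.nodal, Finset.prod, Multiset.toFinset_val, (hq.nodup_roots hL).dedup]
  rfl

end Gauss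

section PositiveRule

variable {L : ℝ[X] →ₗ[ℝ] ℝ} {d : ℕ} {s : Finset ℝ} {ρ : ℝ → ℝ}

/-- A quadrature rule for the functional `L`, with set of nodes `s` and weights `ρ x > 0` at
`x ∈ s`, exact on the polynomials of degree less than `d`. -/
structure IsPositiveRule (L : ℝ[X] →ₗ[ℝ] ℝ) (d : ℕ) (s : Finset ℝ) (ρ : ℝ → ℝ) : Prop where
  weight_pos : ∀ x ∈ s, 0 < ρ x
  apply_eq : ∀ f : ℝ[X], f.degree < d → L f = ∑ x ∈ s, ρ x * f.eval x

theorem sum_mul_eval_nodal_mul (s : Finset ℝ) (ρ : ℝ → ℝ) (g : ℝ[X]) :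
    ∑ x ∈ s, ρ x * (Lagrange.nodal s id * g).eval x = 0 :=
  sum_eq_zero fun x hx => by
    rw [eval_mul, ← id_eq x, Lagrange.eval_nodal_at_node hx, zero_mul, mul_zero]

theorem apply_eq_sum_lagrange_basis
    (hs : ∀ r : ℝ[X], r.degree < #s → L (Lagrange.nodal s id * r) = 0) {f : ℝ[X]}
    (hf : f.degree < (2 * #s : ℕ)) :
    L f = ∑ x ∈ s, L (Lagrange.basis s id x) * f.eval x := by
  have hmonic : (Lagrange.nodal s (id : ℝ → ℝ)).Monic := Lagrange.nodal_monic
  set r := f %ₘ Lagrange.nodal s id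
  have hdiv : r + Lagrange.nodal s id * (f /ₘ Lagrange.nodal s id) = f := modByMonic_add_div f _
  have hr : r.degree < #s := by
    rw [← Lagrange.degree_nodal (v := id)]
    exact degree_modByMonic_lt f hmonic
  have hquot : (f /ₘ Lagrange.nodal s id).degree < #s := by
    rcases eq_or_ne (f /ₘ Lagrange.nodal s id) 0 with h | h
    · rw [h, degree_zero]; exact WithBot.bot_lt_coe _
    · have hf₀ : f ≠ 0 := by rintro rfl; simp at h
      rw [← natDegree_lt_iff_degree_lt hf₀] at hf
      rw [← natDegree_lt_iff_degree_lt h, natDegree_divByMonic f hmonic, Lagrange.natDegree_nodal]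
      omega
  have heval : ∀ x ∈ s, f.eval x = r.eval x := fun x hx => by
    rw [← hdiv, eval_add, eval_mul, ← id_eq x, Lagrange.eval_nodal_at_node hx, zero_mul, add_zero]
  calc L f = L r := by rw [← hdiv, map_add, hs _ hquot, add_zero]
    _ = L (∑ x ∈ s, C (r.eval x) * Lagrange.basis s id x) := by
      rw [← Lagrange.interpolate_apply]
      exact congrArg L (Lagrange.eq_interpolate Function.injective_id.injOn hr)
    _ = ∑ x ∈ s, L (Lagrange.basis s id x) * f.eval x := by
      rw [map_sum]
      refine Finset.sum_congr rfl fun x hx => ?_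
      rw [map_C_mul, heval x hx, mul_comm]

theorem StrictlyPositive.isPositiveRule (hL : StrictlyPositive L #s)
    (hs : ∀ r : ℝ[X], r.degree < #s → L (Lagrange.nodal s id * r) = 0) :
    IsPositiveRule L (2 * #s) s (fun x => L (Lagrange.basis s id x)) := by
  refine ⟨fun x hx => ?_, fun f hf => apply_eq_sum_lagrange_basis hs hf⟩
  have hinj : Set.InjOn (id : ℝ → ℝ) s := Function.injective_id.injOn
  have hb₀ : Lagrange.basis s id x ≠ 0 := Lagrange.basis_ne_zero hinj hx
  have hcard : 0 < #s := card_pos.2 ⟨x, hx⟩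
  have hb : (Lagrange.basis s id x).natDegree < #s := by
    rw [Lagrange.natDegree_basis hinj hx]; omega
  have hsq : (Lagrange.basis s id x * Lagrange.basis s id x).degree < (2 * #s : ℕ) := by
    rw [← natDegree_lt_iff_degree_lt (mul_ne_zero hb₀ hb₀), natDegree_mul hb₀ hb₀]; omega
  have hpos := hL _ hb₀ ((natDegree_lt_iff_degree_lt hb₀).1 hb)
  rw [apply_eq_sum_lagrange_basis hs hsq, Finset.sum_eq_single_of_mem x hx fun y hy hyx => ?_]
    at hpos
  · have hone : (Lagrange.basis s id x).eval x = 1 := Lagrange.eval_basis_self hinj hx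
    simpa only [eval_mul, hone, mul_one] using hpos
  · have hzero : (Lagrange.basis s id x).eval y = 0 :=
      Lagrange.eval_basis_of_ne (v := id) hyx.symm hy
    rw [eval_mul, hzero, mul_zero, mul_zero]

theorem exists_gauss_rule {k : ℕ} {a b : ℝ} (hab : a < b)
    (ha : StrictlyPositive (mulFunctional (X - C a) L) k)
    (hb : StrictlyPositive (mulFunctional (C b - X) L) k) :
    ∃ (s : Finset ℝ) (ρ : ℝ → ℝ), #s = k ∧ (∀ x ∈ s, x ∈ Set.Ioo a b) ∧
      IsPositiveRule L (2 * k) s ρ := by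
  have hL := strictlyPositive_of_endpoints hab ha hb
  obtain ⟨q, rfl, hq⟩ := hL.exists_isMonicOrthogonal
  have hnodal := hq.eq_nodal hL
  have hcard : #q.roots.toFinset = q.natDegree := by
    conv_rhs => rw [hnodal, Lagrange.natDegree_nodal]
  refine ⟨q.roots.toFinset, _, hcard, fun x hx => ?_, hcard ▸ StrictlyPositive.isPositiveRule
    (hcard.symm ▸ hL) fun r hr => ?_⟩
  · exact hq.mem_Ioo_of_isRoot ha hb hL (isRoot_of_mem_roots (Multiset.mem_toFinset.1 hx))
  · rw [← hnodal]
    exact hq.orthogonal r (hcard ▸ hr)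

theorem isPositiveRule_insert {b c : ℝ} (hb : b ∉ s) (hρ : ∀ x ∈ s, 0 < ρ x) (hc : 0 < c)
    (h : ∀ f : ℝ[X], f.degree < d → L f = c * f.eval b + ∑ x ∈ s, ρ x * f.eval x) :
    IsPositiveRule L d (insert b s) (Function.update ρ b c) := by
  have hupdate : ∀ x ∈ s, Function.update ρ b c x = ρ x :=
    fun _ hx => Function.update_of_ne (ne_of_mem_of_not_mem hx hb) _ _
  refine ⟨(forall_mem_insert _ _ _).2 ⟨by rwa [Function.update_self], fun x hx => ?_⟩,
    fun f hf => ?_⟩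
  · rw [hupdate x hx]; exact hρ x hx
  · rw [sum_insert hb, Function.update_self, h f hf]
    exact congrArg _ (sum_congr rfl fun x hx => by rw [hupdate x hx])

theorem IsPositiveRule.apply_of_mulFunctional {a : ℝ} (ha : a ∉ s)
    (h : IsPositiveRule (mulFunctional (X - C a) L) d s ρ) {f : ℝ[X]} (hf : f.degree < d + 1) :
    L f = (L 1 - ∑ x ∈ s, ρ x / (x - a)) * f.eval a + ∑ x ∈ s, ρ x / (x - a) * f.eval x := by
  obtain ⟨g, hg⟩ := X_sub_C_dvd_sub_C_eval (a := a) (p := f)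
  have hgd : g.degree < d := by
    rcases eq_or_ne g 0 with rfl | hg₀
    · rw [degree_zero]; exact WithBot.bot_lt_coe _
    have hfg : f.natDegree = g.natDegree + 1 := by
      rw [← natDegree_sub_C (a := f.eval a), hg, natDegree_mul (X_sub_C_ne_zero a) hg₀,
        natDegree_X_sub_C, add_comm]
    have hf₀ : f ≠ 0 := by rintro rfl; simp at hfg
    have hfd : f.natDegree < d + 1 := (natDegree_lt_iff_degree_lt hf₀).2 (by exact_mod_cast hf)
    exact (natDegree_lt_iff_degree_lt hg₀).1 (by omega)
  have hgx : ∀ x ∈ s, ρ x * g.eval x = ρ x / (x - a) * f.eval x - f.eval a * (ρ x / (x - a)) := by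
    intro x hx
    have hxa : x - a ≠ 0 := sub_ne_zero.2 (ne_of_mem_of_not_mem hx ha)
    have hfx := congrArg (eval x) hg
    simp only [eval_sub, eval_C, eval_mul, eval_X] at hfx
    rw [mul_comm (f.eval a), ← mul_sub, hfx]
    field_simp
  have hLf : L f = f.eval a * L 1 + L ((X - C a) * g) := by
    rw [← hg, map_sub, ← mul_one (C _), map_C_mul]; ring
  rw [hLf, ← mulFunctional_apply, h.apply_eq g hgd, sum_congr rfl hgx, sum_sub_distrib, ← mul_sum]
  ring

theorem StrictlyPositive.mulFunctional_X_sub_C_sq {k : ℕ} (hL : StrictlyPositive L (k + 1))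
    (a : ℝ) : StrictlyPositive (mulFunctional (X - C a) (mulFunctional (X - C a) L)) k := by
  intro p hp hd
  have hne : (X - C a) * p ≠ 0 := mul_ne_zero (X_sub_C_ne_zero a) hp
  have hpos := hL _ hne <| (natDegree_lt_iff_degree_lt hne).1 <| by
    have := (natDegree_lt_iff_degree_lt hp).2 hd
    rw [natDegree_mul (X_sub_C_ne_zero a) hp, natDegree_X_sub_C]; omega
  simpa only [mulFunctional_apply, mul_assoc, mul_left_comm p] using hpos

theorem exists_radau_rule {k : ℕ} {a b : ℝ} (hab : a < b) (hL : StrictlyPositive L (k + 1))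
    (hb : StrictlyPositive (mulFunctional (C b - X) (mulFunctional (X - C a) L)) k) :
    ∃ (s : Finset ℝ) (ρ : ℝ → ℝ), #s = k ∧ (∀ x ∈ s, x ∈ Set.Ioo a b) ∧
      IsPositiveRule L (2 * k + 1) (insert a s) ρ := by
  obtain ⟨s, ρ, hs, hsab, hρ⟩ := exists_gauss_rule hab (hL.mulFunctional_X_sub_C_sq a) hb
  have ha : a ∉ s := fun h => lt_irrefl a (hsab a h).1
  have hexact : ∀ f : ℝ[X], f.degree < (2 * k + 1 : ℕ) → L f = _ := fun f hf =>
    hρ.apply_of_mulFunctional ha (by exact_mod_cast hf)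
  refine ⟨s, _, hs, hsab, isPositiveRule_insert ha
    (fun x hx => div_pos (hρ.weight_pos x hx) (sub_pos.2 (hsab x hx).1)) ?_ hexact⟩
  set w := Lagrange.nodal s (id : ℝ → ℝ)
  have hw : w ≠ 0 := Lagrange.nodal_ne_zero
  have hwd : w.natDegree = k := by rw [Lagrange.natDegree_nodal, hs]
  have hpos : 0 < L (w * w) :=
    hL w hw ((natDegree_lt_iff_degree_lt hw).1 (by omega))
  rw [hexact _ ((natDegree_lt_iff_degree_lt (mul_ne_zero hw hw)).1
      (by rw [natDegree_mul hw hw]; omega)), sum_mul_eval_nodal_mul, add_zero, eval_mul] at hpos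
  exact pos_of_mul_pos_left hpos (mul_self_nonneg _)

end PositiveRule

section OrthogonalSystem

variable {L : ℝ[X] →ₗ[ℝ] ℝ} {m : ℕ} {p : ℕ → ℝ[X]}

/-- `p 0, …, p (m - 1)` are orthogonal polynomials for the functional `L`, with `p i` of degree `i`
and with positive leading coefficient; the values `p i` with `m ≤ i` are irrelevant. -/
structure IsOrthogonalSystem (L : ℝ[X] →ₗ[ℝ] ℝ) (m : ℕ) (p : ℕ → ℝ[X]) : Prop where
  natDegree_le : ∀ i < m, (p i).natDegree ≤ i
  coeff_pos : ∀ i < m, 0 < (p i).coeff i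
  orthogonal : ∀ j < m, ∀ i < j, L (p i * p j) = 0

namespace IsOrthogonalSystem

theorem mono {l : ℕ} (hp : IsOrthogonalSystem L m p) (hl : l ≤ m) : IsOrthogonalSystem L l p :=
  ⟨fun i hi => hp.natDegree_le i (hi.trans_le hl), fun i hi => hp.coeff_pos i (hi.trans_le hl),
    fun j hj => hp.orthogonal j (hj.trans_le hl)⟩

theorem ne_zero (hp : IsOrthogonalSystem L m p) {i : ℕ} (hi : i < m) : p i ≠ 0 := fun h =>
  (hp.coeff_pos i hi).ne' (by rw [h, coeff_zero])

theorem natDegree_eq (hp : IsOrthogonalSystem L m p) {i : ℕ} (hi : i < m) :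
    (p i).natDegree = i :=
  natDegree_eq_of_le_of_coeff_ne_zero (hp.natDegree_le i hi) (hp.coeff_pos i hi).ne'

theorem degree_eq (hp : IsOrthogonalSystem L m p) {i : ℕ} (hi : i < m) : (p i).degree = i := by
  rw [degree_eq_natDegree (hp.ne_zero hi), hp.natDegree_eq hi]

theorem apply_mul_self_pos (hp : IsOrthogonalSystem L m p) (hL : StrictlyPositive L m) {i : ℕ}
    (hi : i < m) : 0 < L (p i * p i) :=
  hL _ (hp.ne_zero hi) (by rw [hp.degree_eq hi]; exact_mod_cast hi)

theorem degree_sub_smul_lt (hp : IsOrthogonalSystem L m p) {i : ℕ} (hi : i < m) {f : ℝ[X]}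
    (hf : f.degree < (i + 1 : ℕ)) : (f - (f.coeff i / (p i).coeff i) • p i).degree < i := by
  have hc : (p i).coeff i ≠ 0 := (hp.coeff_pos i hi).ne'
  rw [degree_lt_iff_coeff_zero] at hf ⊢
  intro j hj
  rw [coeff_sub, coeff_smul, smul_eq_mul]
  rcases hj.eq_or_lt with rfl | hj
  · rw [div_mul_cancel₀ _ hc, sub_self]
  · rw [hf j hj, coeff_eq_zero_of_natDegree_lt ((hp.natDegree_le i hi).trans_lt hj), mul_zero,
      sub_zero]

theorem mem_span_of_degree_lt (hp : IsOrthogonalSystem L m p) {f : ℝ[X]} (hf : f.degree < m) :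
    f ∈ Submodule.span ℝ (p '' Set.Iio m) := by
  induction m generalizing f with
  | zero =>
    have hf₀ : f = 0 := Polynomial.ext fun i => (degree_lt_iff_coeff_zero f 0).1 hf i i.zero_le
    exact hf₀ ▸ zero_mem _
  | succ m ih =>
    rw [← sub_add_cancel f ((f.coeff m / (p m).coeff m) • p m)]
    exact add_mem (Submodule.span_mono (Set.image_mono (Set.Iio_subset_Iio m.le_succ))
      (ih (hp.mono m.le_succ) (hp.degree_sub_smul_lt m.lt_succ_self hf)))
      (Submodule.smul_mem _ _ (Submodule.subset_span ⟨m, m.lt_succ_self, rfl⟩))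

theorem apply_mul_eq_zero (hp : IsOrthogonalSystem L m p) {i : ℕ} (hi : i < m) {f : ℝ[X]}
    (hf : f.degree < i) : L (f * p i) = 0 := by
  have hker : Submodule.span ℝ (p '' Set.Iio i) ≤ (L ∘ₗ LinearMap.mulRight ℝ (p i)).ker :=
    Submodule.span_le.2 <| by rintro _ ⟨l, hl, rfl⟩; exact hp.orthogonal i hi l hl
  exact hker ((hp.mono hi.le).mem_span_of_degree_lt hf)

theorem apply_mul_eq_coeff_div_mul (hp : IsOrthogonalSystem L m p) {i : ℕ} (hi : i < m)
    {f : ℝ[X]} (hf : f.degree < (i + 1 : ℕ)) :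
    L (f * p i) = f.coeff i / (p i).coeff i * L (p i * p i) := by
  have h := hp.apply_mul_eq_zero hi (hp.degree_sub_smul_lt hi hf)
  rwa [sub_mul, map_sub, smul_mul_assoc, map_smul, smul_eq_mul, sub_eq_zero] at h

theorem apply_mul_eq_zero_of_ne (hp : IsOrthogonalSystem L m p) {i j : ℕ} (hi : i < m) (hj : j < m)
    (h : i ≠ j) : L (p i * p j) = 0 := by
  rcases h.lt_or_gt with h | h
  · exact hp.orthogonal j hj i h
  · rw [mul_comm]; exact hp.orthogonal i hi j h

theorem eq_sum (hp : IsOrthogonalSystem L m p) (hL : StrictlyPositive L m) {f : ℝ[X]}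
    (hf : f.degree < m) : f = ∑ l ∈ range m, (L (f * p l) / L (p l * p l)) • p l := by
  set g := ∑ l ∈ range m, (L (f * p l) / L (p l * p l)) • p l with hg
  have hd : (f - g).degree < m := mem_degreeLT.1 <| sub_mem (mem_degreeLT.2 hf) <|
    sum_mem fun l hl => Submodule.smul_mem _ _ <| mem_degreeLT.2 <| by
      rw [hp.degree_eq (mem_range.1 hl)]; exact_mod_cast mem_range.1 hl
  have horth : ∀ l < m, L ((f - g) * p l) = 0 := by
    intro l hl
    rw [sub_mul, map_sub, sub_eq_zero, hg, sum_mul, map_sum,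
      sum_eq_single_of_mem l (mem_range.2 hl) fun i hi hil => ?_]
    · rw [smul_mul_assoc, map_smul, smul_eq_mul,
        div_mul_cancel₀ _ (hp.apply_mul_self_pos hL hl).ne']
    · rw [smul_mul_assoc, map_smul, hp.apply_mul_eq_zero_of_ne (mem_range.1 hi) hl hil, smul_zero]
  have hker : Submodule.span ℝ (p '' Set.Iio m) ≤ (L ∘ₗ LinearMap.mulLeft ℝ (f - g)).ker :=
    Submodule.span_le.2 <| by rintro _ ⟨l, hl, rfl⟩; exact horth l hl
  by_contra hne
  exact (hL _ (sub_ne_zero.2 hne) hd).ne' (hker (hp.mem_span_of_degree_lt hd))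

end IsOrthogonalSystem

end OrthogonalSystem

section Reproducing

variable {L M : ℝ[X] →ₗ[ℝ] ℝ} {k m : ℕ} {p : ℕ → ℝ[X]} {w : ℝ[X]} {x c : ℝ}

/-- `w` is the reproducing kernel at the point `x` of the polynomials of degree less than `k`, for
the bilinear form `(p, q) ↦ M (p * q)`. -/
structure IsReproducingAt (M : ℝ[X] →ₗ[ℝ] ℝ) (k : ℕ) (x : ℝ) (w : ℝ[X]) : Prop where
  degree_lt : w.degree < k
  apply_mul : ∀ p : ℝ[X], p.degree < k → M (w * p) = p.eval x

/-- The Christoffel–Darboux kernel `∑ l ≤ j, p_l(T) p_l / L(p_l²)` at the point `T`. -/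
noncomputable def christoffelKernel (L : ℝ[X] →ₗ[ℝ] ℝ) (p : ℕ → ℝ[X]) (T : ℝ) (j : ℕ) : ℝ[X] :=
  ∑ l ∈ range (j + 1), ((p l).eval T / L (p l * p l)) • p l

theorem IsOrthogonalSystem.isReproducingAt_christoffelKernel (hp : IsOrthogonalSystem L m p)
    (hL : StrictlyPositive L m) {j : ℕ} (hj : j < m) :
    IsReproducingAt L (j + 1) x (christoffelKernel L p x j) where
  degree_lt := mem_degreeLT.1 <| sum_mem fun l hl => Submodule.smul_mem _ _ <| mem_degreeLT.2 <| by
    rw [hp.degree_eq ((mem_range.1 hl).trans_le hj)]; exact_mod_cast mem_range.1 hl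
  apply_mul f hf := by
    conv_rhs => rw [(hp.mono hj).eq_sum (hL.mono hj) hf]
    simp only [christoffelKernel, sum_mul, map_sum, smul_mul_assoc, map_smul, smul_eq_mul,
      eval_finsetSum, eval_smul, mul_comm f]
    exact sum_congr rfl fun l _ => by ring

theorem IsReproducingAt.sq_eval_le (hw : IsReproducingAt M k x w) (hM : StrictlyPositive M k)
    {f : ℝ[X]} (hf : f.degree < k) : f.eval x ^ 2 ≤ w.eval x * M (f * f) := by
  have hB : M (w * f) * M (f * w) ≤ M (w * w) * M (f * f) :=
    LinearMap.BilinForm.apply_mul_apply_le_of_forall_zero_le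
    (((LinearMap.mul ℝ ℝ[X]).compr₂ M).domRestrict₁₂ (degreeLT ℝ k) (degreeLT ℝ k))
    (fun g => hM.apply_mul_self_nonneg (mem_degreeLT.1 g.2))
    ⟨w, mem_degreeLT.2 hw.degree_lt⟩ ⟨f, mem_degreeLT.2 hf⟩
  rwa [mul_comm f w, hw.apply_mul f hf, hw.apply_mul w hw.degree_lt, ← sq] at hB

theorem IsReproducingAt.strictlyPositive_sub (hw : IsReproducingAt M k x w)
    (hM : StrictlyPositive M k) (hc : 0 ≤ c) (hcw : c * w.eval x < 1) :
    StrictlyPositive (M - c • leval x) k := by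
  intro f hf hd
  have hpos := hM f hf hd
  have hle := mul_le_mul_of_nonneg_left (hw.sq_eval_le hM hd) hc
  simp only [LinearMap.sub_apply, LinearMap.smul_apply, leval_apply, eval_mul, smul_eq_mul]
  nlinarith

end Reproducing

section DiscreteFunctional

variable {L : ℝ[X] →ₗ[ℝ] ℝ} {m : ℕ} {p : ℕ → ℝ[X]} {s : Finset ℝ} {ρ : ℝ → ℝ} {T : ℝ}

/-- Integration against the discrete measure with mass `ρ x` at each point `x` of `s`. -/
noncomputable def discreteFunctional (s : Finset ℝ) (ρ : ℝ → ℝ) : ℝ[X] →ₗ[ℝ] ℝ :=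
  ∑ x ∈ s, ρ x • leval x

theorem discreteFunctional_apply (s : Finset ℝ) (ρ : ℝ → ℝ) (f : ℝ[X]) :
    discreteFunctional s ρ f = ∑ x ∈ s, ρ x * f.eval x := by
  simp [discreteFunctional, LinearMap.sum_apply]

theorem strictlyPositive_discreteFunctional (hρ : ∀ x ∈ s, 0 < ρ x) :
    StrictlyPositive (discreteFunctional s ρ) #s := by
  intro f hf hd
  have hnn : ∀ x ∈ s, 0 ≤ ρ x * (f * f).eval x := fun x hx =>
    mul_nonneg (hρ x hx).le (by rw [eval_mul]; exact mul_self_nonneg _)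
  rw [discreteFunctional_apply]
  refine (sum_nonneg hnn).lt_of_ne' fun h => hf ?_
  refine eq_zero_of_degree_lt_of_eval_finset_eq_zero s hd fun x hx => ?_
  have := (mul_eq_zero.1 ((sum_eq_zero_iff_of_nonneg hnn).1 h x hx)).resolve_left (hρ x hx).ne'
  rwa [eval_mul, mul_self_eq_zero] at this

theorem mulFunctional_discreteFunctional_insert (hT : T ∉ s) :
    mulFunctional (C T - X) (discreteFunctional (insert T s) ρ) =
      discreteFunctional s fun x => ρ x * (T - x) := by
  refine LinearMap.ext fun f => ?_
  rw [mulFunctional_apply, discreteFunctional_apply, discreteFunctional_apply, sum_insert hT]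
  simp [mul_assoc]

theorem eval_nodal_pos (hT : ∀ x ∈ s, x < T) : 0 < (Lagrange.nodal s id).eval T := by
  rw [Lagrange.eval_nodal]
  exact prod_pos fun x hx => sub_pos.2 (hT x hx)

theorem neg_one_pow_card_mul_eval_nodal_pos (hT : ∀ x ∈ s, T < x) :
    0 < (-1) ^ #s * (Lagrange.nodal s id).eval T := by
  rw [Lagrange.eval_nodal, ← prod_const, ← prod_mul_distrib]
  exact prod_pos fun x hx => by simpa using hT x hx

/-- The nodal polynomial of the points of `s` to the left of `y`. -/
noncomputable def prefixNodal (s : Finset ℝ) (y : ℝ) : ℝ[X] :=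
  Lagrange.nodal {x ∈ s | x < y} id

theorem prefixNodal_insert_self (hT : ∀ x ∈ s, x < T) :
    prefixNodal (insert T s) T = Lagrange.nodal s id := by
  rw [prefixNodal, filter_insert, if_neg (lt_irrefl T), filter_true_of_mem hT]

theorem prefixNodal_insert_of_lt {y : ℝ} (hy : y < T) :
    prefixNodal (insert T s) y = prefixNodal s y := by
  rw [prefixNodal, filter_insert, if_neg hy.not_gt, prefixNodal]

theorem IsOrthogonalSystem.eval_pos {l : ℕ} (hp : IsOrthogonalSystem L (l + 1) p)
    (hL : StrictlyPositive L l) (hT : StrictlyPositive (mulFunctional (C T - X) L) l) :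
    0 < (p l).eval T := by
  have hlead : 0 < (p l).leadingCoeff := by
    rw [leadingCoeff, hp.natDegree_eq l.lt_succ_self]; exact hp.coeff_pos l l.lt_succ_self
  rcases l.eq_zero_or_pos with rfl | hl
  · rw [eq_C_of_natDegree_eq_zero (hp.natDegree_eq zero_lt_one), eval_C]
    exact hp.coeff_pos 0 zero_lt_one
  by_contra! hneg
  obtain ⟨a, haT, ha⟩ : ∃ a ∈ Set.Ici T, (p l).eval a = 0 := by
    have htop := (p l).tendsto_atTop_of_leadingCoeff_nonneg
      (by rw [hp.degree_eq l.lt_succ_self]; exact_mod_cast hl) hlead.le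
    obtain ⟨b, hTb, hb⟩ := ((Filter.eventually_ge_atTop T).and (htop.eventually_ge_atTop 0)).exists
    obtain ⟨a, ha, ha₀⟩ := intermediate_value_Icc hTb (p l).continuous.continuousOn ⟨hneg, hb⟩
    exact ⟨a, ha.1, ha₀⟩
  obtain ⟨v, hv⟩ := dvd_iff_isRoot.2 ha
  have hv₀ : v ≠ 0 := by rintro rfl; exact hp.ne_zero l.lt_succ_self (by rw [hv, mul_zero])
  have hvd : v.degree < l := by
    rw [degree_eq_natDegree hv₀, Nat.cast_lt, ← hp.natDegree_eq l.lt_succ_self, hv,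
      natDegree_mul (X_sub_C_ne_zero a) hv₀, natDegree_X_sub_C]
    omega
  have horth := hp.apply_mul_eq_zero l.lt_succ_self hvd
  have hpos := hT v hv₀ hvd
  rw [hv, mul_left_comm, map_X_sub_C_mul] at horth
  rw [mulFunctional_apply, map_C_sub_X_mul] at hpos
  nlinarith [hL v hv₀ hvd, Set.mem_Ici.1 haT]

theorem IsOrthogonalSystem.isOrthogonalSystem_christoffelKernel (hp : IsOrthogonalSystem L m p)
    (hL : StrictlyPositive L m) (hT : ∀ l < m, 0 < (p l).eval T) :
    IsOrthogonalSystem (mulFunctional (C T - X) L) m (christoffelKernel L p T) := by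
  have hdeg : ∀ i < m, (christoffelKernel L p T i).natDegree ≤ i := fun i hi =>
    natDegree_le_iff_degree_lt_succ.2
      (hp.isReproducingAt_christoffelKernel (x := T) hL hi).degree_lt
  refine ⟨hdeg, fun i hi => ?_, fun j hj i hij => ?_⟩
  · rw [christoffelKernel, sum_range_succ, coeff_add, finsetSum_coeff, sum_eq_zero, zero_add,
      coeff_smul, smul_eq_mul]
    · exact mul_pos (div_pos (hT i hi) (hp.apply_mul_self_pos hL hi)) (hp.coeff_pos i hi)
    · intro l hl
      have hli := mem_range.1 hl
      rw [coeff_smul, coeff_eq_zero_of_natDegree_lt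
        ((hp.natDegree_le l (hli.trans hi)).trans_lt hli), smul_zero]
  · have hd : ((C T - X) * christoffelKernel L p T i : ℝ[X]).degree < (j + 1 : ℕ) := by
      refine natDegree_le_iff_degree_lt_succ.1 (natDegree_mul_le.trans ?_)
      have hX : (C T - X).natDegree ≤ 1 := by
        rw [← natDegree_neg, neg_sub]; exact natDegree_X_sub_C_le T
      have := hdeg i (hij.trans hj)
      omega
    rw [mulFunctional_apply, ← mul_assoc, mul_comm,
      (hp.isReproducingAt_christoffelKernel hL hj).apply_mul _ hd]
    simp

theorem christoffelKernel_mem_hull (hL : StrictlyPositive L m)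
    (hp : IsOrthogonalSystem L m p) (hT : ∀ l < m, 0 < (p l).eval T) {j : ℕ} (hj : j < m) :
    christoffelKernel L p T j ∈ PointedCone.hull ℝ (p '' Set.Iio m) :=
  sum_mem fun l hl => by
    have hlm : l < m := (mem_range_succ_iff.1 hl).trans_lt hj
    exact PointedCone.smul_mem _ (div_nonneg (hT l hlm).le (hp.apply_mul_self_pos hL hlm).le)
      (PointedCone.subset_hull ⟨l, hlm, rfl⟩)

theorem IsOrthogonalSystem.mem_hull (hp : IsOrthogonalSystem L m p) (hL : StrictlyPositive L m)
    {f : ℝ[X]} (hf : f.degree < m) (h : ∀ l < m, 0 ≤ L (f * p l)) :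
    f ∈ PointedCone.hull ℝ (p '' Set.Iio m) := by
  rw [hp.eq_sum hL hf]
  exact sum_mem fun l hl => PointedCone.smul_mem _
    (div_nonneg (h l (mem_range.1 hl)) (hp.apply_mul_self_pos hL (mem_range.1 hl)).le)
    (PointedCone.subset_hull ⟨l, mem_range.1 hl, rfl⟩)

-- The Cohn–Kumar induction: removing the largest node `T` replaces the measure by `(T - x)` times
-- itself, whose orthogonal polynomials are the Christoffel kernels at `T`.
theorem prefixNodal_mem_hull (hρ : ∀ x ∈ s, 0 < ρ x)
    (hp : IsOrthogonalSystem (discreteFunctional s ρ) #s p) {y : ℝ} (hy : y ∈ s) :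
    prefixNodal s y ∈ PointedCone.hull ℝ (p '' Set.Iio #s) := by
  induction s using Finset.induction_on_max generalizing ρ p with
  | empty => simp at hy
  | insert T s hT ih =>
    have hTs : T ∉ s := fun h => (hT T h).false
    have hcard : #(insert T s) = #s + 1 := card_insert_of_notMem hTs
    have hL := strictlyPositive_discreteFunctional hρ
    have hρ' : ∀ x ∈ s, 0 < ρ x * (T - x) := fun x hx =>
      mul_pos (hρ x (mem_insert_of_mem hx)) (sub_pos.2 (hT x hx))
    have hM := strictlyPositive_discreteFunctional hρ'
    rw [← mulFunctional_discreteFunctional_insert hTs] at hM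
    rw [hcard] at hp hL ⊢
    have hpT : ∀ l < #s + 1, 0 < (p l).eval T := fun l hl =>
      (hp.mono hl).eval_pos (hL.mono hl.le) (hM.mono (Nat.lt_succ_iff.1 hl))
    rcases mem_insert.1 hy with rfl | hys
    · have hw := eval_nodal_pos hT
      rw [prefixNodal_insert_self hT]
      refine hp.mem_hull hL ?_ fun l hl => ?_
      · rw [Lagrange.degree_nodal]; exact_mod_cast (#s).lt_succ_self
      · rw [discreteFunctional_apply, sum_insert hTs, sum_mul_eval_nodal_mul, add_zero,
          eval_mul]
        exact mul_nonneg (hρ y (mem_insert_self y s)).le (mul_nonneg hw.le (hpT l hl).le)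
    · rw [prefixNodal_insert_of_lt (hT y hys)]
      have hq := (hp.mono (#s).le_succ).isOrthogonalSystem_christoffelKernel
        (hL.mono (#s).le_succ) fun l hl => hpT l (hl.trans_le (#s).le_succ)
      rw [mulFunctional_discreteFunctional_insert hTs] at hq
      refine Submodule.span_le.2 ?_ (ih hρ' hq hys)
      rintro _ ⟨j, hj, rfl⟩
      exact christoffelKernel_mem_hull hL hp hpT (Nat.lt_succ_of_lt hj)

end DiscreteFunctional

section GegenbauerFunctional

variable {n : ℕ}

theorem one_sub_sq_pos {t : ℝ} (ht : t ∈ Set.Ioo (-1 : ℝ) 1) : 0 < 1 - t ^ 2 :=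
  sub_pos.2 ((sq_lt_one_iff_abs_lt_one t).2 (abs_lt.2 ht))

theorem gegWeight_pos (n : ℕ) {t : ℝ} (ht : t ∈ Set.Ioo (-1 : ℝ) 1) : 0 < gegWeight n t :=
  Real.rpow_pos_of_pos (one_sub_sq_pos ht) _

theorem gegWeight_eq_mul_inv_sqrt (n : ℕ) {t : ℝ} (ht : t ∈ Set.Ioo (-1 : ℝ) 1) :
    gegWeight n t = (1 - t ^ 2) ^ (((n : ℝ) - 2) / 2) * √((1 - t ^ 2)⁻¹) := by
  rw [gegWeight, Real.sqrt_inv, Real.sqrt_eq_rpow, ← Real.rpow_neg (one_sub_sq_pos ht).le,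
    ← Real.rpow_add (one_sub_sq_pos ht)]
  ring_nf

theorem continuous_one_sub_sq_rpow {a : ℝ} (ha : 0 ≤ a) :
    Continuous fun t : ℝ => (1 - t ^ 2) ^ a :=
  Continuous.rpow_const (by fun_prop) fun _ => Or.inr ha

theorem integrableOn_mul_gegWeight (hn : 2 ≤ n) {f : ℝ → ℝ} (hf : Continuous f) :
    IntegrableOn (fun t => f t * gegWeight n t) (Set.Icc (-1) 1) := by
  have hn₂ : (2 : ℝ) ≤ n := by exact_mod_cast hn
  have hsqrt : IntegrableOn (fun t : ℝ => √((1 - t ^ 2)⁻¹)) (Set.Icc (-1) 1) :=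
    (intervalIntegrable_iff_integrableOn_Icc_of_le (by norm_num)).1
      Chebyshev.intervalIntegrable_sqrt_one_sub_sq_inv
  have hprod := hsqrt.continuousOn_mul (hf.mul
    (continuous_one_sub_sq_rpow (a := (n - 2) / 2) (by linarith))).continuousOn isCompact_Icc
  rw [integrableOn_Icc_iff_integrableOn_Ioo] at hprod ⊢
  refine hprod.congr_fun (fun t ht => ?_) measurableSet_Ioo
  simp only [gegWeight_eq_mul_inv_sqrt n ht, Pi.mul_apply, mul_assoc]

theorem integral_eval_mul_gegWeight_pos (hn : 2 ≤ n) {p : ℝ[X]} (hp : p ≠ 0)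
    (h : ∀ t ∈ Set.Icc (-1 : ℝ) 1, 0 ≤ p.eval t) :
    0 < ∫ t in Set.Icc (-1 : ℝ) 1, p.eval t * gegWeight n t := by
  rw [integral_Icc_eq_integral_Ioo, setIntegral_pos_iff_support_of_nonneg_ae]
  · have hsub : Set.Ioo (-1) 1 \ (p.roots.toFinset : Set ℝ) ⊆
        Function.support (fun t => p.eval t * gegWeight n t) ∩ Set.Ioo (-1) 1 := by
      rintro t ⟨ht, hroot⟩
      refine ⟨mul_ne_zero (fun h₀ => hroot ?_) (gegWeight_pos n ht).ne', ht⟩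
      simp [hp, h₀]
    refine lt_of_lt_of_le ?_ (measure_mono hsub)
    rw [measure_sdiff_null ((finite_toSet _).measure_zero _)]
    simp
  · filter_upwards [ae_restrict_mem measurableSet_Ioo] with t ht
    exact mul_nonneg (h t (Set.Ioo_subset_Icc_self ht)) (gegWeight_pos n ht).le
  · exact (integrableOn_mul_gegWeight hn p.continuous).mono_set Set.Ioo_subset_Icc_self

theorem integral_gegWeight_pos (hn : 2 ≤ n) : 0 < ∫ t in Set.Icc (-1 : ℝ) 1, gegWeight n t := by
  simpa using integral_eval_mul_gegWeight_pos hn one_ne_zero (by simp)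

/-- Integration of polynomials against the probability measure `μ_n`, as a linear functional. -/
noncomputable def gegFunctional (hn : 2 ≤ n) : ℝ[X] →ₗ[ℝ] ℝ where
  toFun p := gegInt n fun t => p.eval t
  map_add' p q := by
    simp only [gegInt, eval_add, add_mul]
    rw [integral_add (integrableOn_mul_gegWeight hn p.continuous)
      (integrableOn_mul_gegWeight hn q.continuous), mul_add]
  map_smul' c p := by
    simp only [gegInt, eval_smul, smul_eq_mul, RingHom.id_apply, mul_assoc]
    rw [integral_const_mul, mul_left_comm]

theorem gegFunctional_apply (hn : 2 ≤ n) (p : ℝ[X]) :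
    gegFunctional hn p = gegInt n fun t => p.eval t := rfl

theorem gegFunctional_one (hn : 2 ≤ n) : gegFunctional hn 1 = 1 := by
  simp [gegFunctional_apply, gegInt, (integral_gegWeight_pos hn).ne']

theorem gegFunctional_pos (hn : 2 ≤ n) {p : ℝ[X]} (hp : p ≠ 0)
    (h : ∀ t ∈ Set.Icc (-1 : ℝ) 1, 0 ≤ p.eval t) : 0 < gegFunctional hn p :=
  mul_pos (inv_pos.2 (integral_gegWeight_pos hn)) (integral_eval_mul_gegWeight_pos hn hp h)

theorem strictlyPositive_mulFunctional_gegFunctional (hn : 2 ≤ n) (k : ℕ) {w : ℝ[X]} (hw : w ≠ 0)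
    (h : ∀ t ∈ Set.Icc (-1 : ℝ) 1, 0 ≤ w.eval t) :
    StrictlyPositive (mulFunctional w (gegFunctional hn)) k := by
  intro p hp _
  rw [mulFunctional_apply]
  refine gegFunctional_pos hn (mul_ne_zero hw (mul_ne_zero hp hp)) fun t ht => ?_
  rw [eval_mul, eval_mul]
  exact mul_nonneg (h t ht) (mul_self_nonneg _)

theorem strictlyPositive_gegFunctional (hn : 2 ≤ n) (k : ℕ) :
    StrictlyPositive (gegFunctional hn) k := by
  have h := strictlyPositive_mulFunctional_gegFunctional hn k one_ne_zero fun t _ => by simp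
  simpa [StrictlyPositive] using h

theorem hasDerivAt_eval_mul_rpow (n : ℕ) (p : ℝ[X]) {t : ℝ} (ht : t ∈ Set.Ioo (-1 : ℝ) 1) :
    HasDerivAt (fun t => p.eval t * (1 - t ^ 2) ^ (((n : ℝ) - 1) / 2))
      (((1 - X ^ 2) * derivative p - C ((n : ℝ) - 1) * (X * p)).eval t * gegWeight n t) t := by
  have hpos := one_sub_sq_pos ht
  have hrpow : (1 - t ^ 2) ^ (((n : ℝ) - 1) / 2) = (1 - t ^ 2) * gegWeight n t := by
    rw [gegWeight, mul_comm, ← Real.rpow_add_one hpos.ne']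
    ring_nf
  have hrpow' : (1 - t ^ 2) ^ (((n : ℝ) - 1) / 2 - 1) = gegWeight n t := by
    rw [gegWeight]
    ring_nf
  refine ((p.hasDerivAt t).mul (((hasDerivAt_pow 2 t).const_sub 1).rpow_const
    (p := ((n : ℝ) - 1) / 2) (Or.inl hpos.ne'))).congr_deriv ?_
  rw [hrpow, hrpow']
  simp only [eval_sub, eval_mul, eval_one, eval_pow, eval_X, eval_C]
  push_cast
  ring

theorem gegFunctional_pearson (hn : 2 ≤ n) (p : ℝ[X]) :
    gegFunctional hn ((1 - X ^ 2) * derivative p) = ((n : ℝ) - 1) * gegFunctional hn (X * p) := by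
  have hn₂ : (2 : ℝ) ≤ n := by exact_mod_cast hn
  have hint := integrableOn_mul_gegWeight hn
    ((1 - X ^ 2) * derivative p - C ((n : ℝ) - 1) * (X * p)).continuous
  have hfund := intervalIntegral.integral_eq_sub_of_hasDerivAt_of_le (by norm_num)
    (p.continuous.mul (continuous_one_sub_sq_rpow (a := ((n : ℝ) - 1) / 2)
      (by linarith))).continuousOn (fun t ht => hasDerivAt_eval_mul_rpow n p ht)
    ((intervalIntegrable_iff_integrableOn_Icc_of_le (by norm_num)).2 hint)
  rw [intervalIntegral.integral_of_le (by norm_num), ← integral_Icc_eq_integral_Ioc] at hfund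
  have hzero : (0 : ℝ) ^ (((n : ℝ) - 1) / 2) = 0 := Real.zero_rpow (by linarith)
  norm_num [hzero] at hfund
  rw [← sub_eq_zero, ← map_C_mul, ← map_sub, gegFunctional_apply, gegInt]
  simp [hfund]

end GegenbauerFunctional

section Gegenbauer

variable {n : ℕ}

/-- The coefficient `a_i` of the recurrence `X P_i = (1 - a_i) P_{i+1} + a_i P_{i-1}` of the
Gegenbauer polynomials; `a_0 = 0` also for `n = 2`, where it is the junk value `0 / 0`. -/
noncomputable def gegCoeff (n i : ℕ) : ℝ := i / (2 * i + n - 2)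

/-- The Gegenbauer polynomials, defined by their three-term recurrence. -/
noncomputable def gegenbauer (n : ℕ) : ℕ → ℝ[X]
  | 0 => 1
  | 1 => X
  | i + 2 => C (1 - gegCoeff n (i + 1))⁻¹ *
      (X * gegenbauer n (i + 1) - C (gegCoeff n (i + 1)) * gegenbauer n i)

theorem gegenbauer_zero (n : ℕ) : gegenbauer n 0 = 1 := by rw [gegenbauer]

theorem gegenbauer_one (n : ℕ) : gegenbauer n 1 = X := by rw [gegenbauer]

theorem gegCoeff_zero (n : ℕ) : gegCoeff n 0 = 0 := by simp [gegCoeff]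

theorem gegCoeff_succ (n i : ℕ) : gegCoeff n (i + 1) = (i + 1) / (2 * i + n) := by
  rw [gegCoeff]
  push_cast
  ring_nf

theorem gegCoeff_succ_pos (hn : 2 ≤ n) (i : ℕ) : 0 < gegCoeff n (i + 1) := by
  rw [gegCoeff_succ]
  positivity

theorem gegCoeff_le_half (hn : 2 ≤ n) (i : ℕ) : gegCoeff n i ≤ 1 / 2 := by
  have hn₂ : (2 : ℝ) ≤ n := by exact_mod_cast hn
  have : (0 : ℝ) ≤ i := i.cast_nonneg
  exact div_le_of_le_mul₀ (by linarith) (by norm_num) (by linarith)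

theorem one_sub_gegCoeff_pos (hn : 2 ≤ n) (i : ℕ) : 0 < 1 - gegCoeff n i := by
  linarith [gegCoeff_le_half hn i]

theorem gegCoeff_monotone (hn : 2 ≤ n) : Monotone (gegCoeff n) := by
  have hn₂ : (2 : ℝ) ≤ n := by exact_mod_cast hn
  refine monotone_nat_of_le_succ fun i => ?_
  rcases i with _ | i
  · rw [gegCoeff_zero]
    exact (gegCoeff_succ_pos hn 0).le
  · rw [gegCoeff_succ, gegCoeff_succ, div_le_div_iff₀ (by positivity) (by positivity)]
    push_cast
    nlinarith

theorem X_mul_gegenbauer_succ (hn : 2 ≤ n) (i : ℕ) :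
    X * gegenbauer n (i + 1) = C (1 - gegCoeff n (i + 1)) * gegenbauer n (i + 2) +
      C (gegCoeff n (i + 1)) * gegenbauer n i := by
  rw [gegenbauer, ← mul_assoc, ← C_mul, mul_inv_cancel₀ (one_sub_gegCoeff_pos hn _).ne', C_1,
    one_mul, sub_add_cancel]

theorem eval_one_gegenbauer (hn : 2 ≤ n) : ∀ i, (gegenbauer n i).eval 1 = 1
  | 0 => by simp [gegenbauer_zero]
  | 1 => by simp [gegenbauer_one]
  | i + 2 => by
    have := (one_sub_gegCoeff_pos hn (i + 1)).ne'
    simp [gegenbauer, eval_one_gegenbauer hn i, eval_one_gegenbauer hn (i + 1), this]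

theorem eval_neg_one_gegenbauer (hn : 2 ≤ n) : ∀ i, (gegenbauer n i).eval (-1) = (-1) ^ i
  | 0 => by simp [gegenbauer_zero]
  | 1 => by simp [gegenbauer_one]
  | i + 2 => by
    have := (one_sub_gegCoeff_pos hn (i + 1)).ne'
    simp only [gegenbauer, eval_mul, eval_sub, eval_C, eval_X, eval_neg_one_gegenbauer hn i,
      eval_neg_one_gegenbauer hn (i + 1)]
    field_simp
    ring

theorem natDegree_gegenbauer_le : ∀ i, (gegenbauer n i).natDegree ≤ i
  | 0 => by simp [gegenbauer_zero]
  | 1 => by simp [gegenbauer_one]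
  | i + 2 => by
    rw [gegenbauer]
    refine (natDegree_C_mul_le _ _).trans ((natDegree_sub_le _ _).trans (max_le ?_ ?_))
    · refine natDegree_mul_le.trans ?_
      linarith [natDegree_gegenbauer_le (i + 1), natDegree_X (R := ℝ)]
    · refine (natDegree_C_mul_le _ _).trans ?_
      linarith [natDegree_gegenbauer_le i]

theorem coeff_gegenbauer_pos (hn : 2 ≤ n) : ∀ i, 0 < (gegenbauer n i).coeff i
  | 0 => by simp [gegenbauer_zero]
  | 1 => by simp [gegenbauer_one]
  | i + 2 => by
    have h₀ : (gegenbauer n i).coeff (i + 2) = 0 :=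
      coeff_eq_zero_of_natDegree_lt ((natDegree_gegenbauer_le i).trans_lt (by omega))
    rw [gegenbauer, coeff_C_mul, coeff_sub, coeff_X_mul, coeff_C_mul, h₀, mul_zero, sub_zero]
    exact mul_pos (inv_pos.2 (one_sub_gegCoeff_pos hn _)) (coeff_gegenbauer_pos hn (i + 1))

theorem gegenbauer_recurrence (hn : 2 ≤ n) (i : ℕ) :
    ((i : ℝ[X]) + (n : ℝ[X]) - 1) * gegenbauer n (i + 2) =
      (2 * (i : ℝ[X]) + (n : ℝ[X])) * X * gegenbauer n (i + 1) -
        ((i : ℝ[X]) + 1) * gegenbauer n i := by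
  have hne : (2 * i + n : ℝ) ≠ 0 := by positivity
  have hlower : C (gegCoeff n (i + 1)) * (2 * (i : ℝ[X]) + (n : ℝ[X])) = (i : ℝ[X]) + 1 := by
    have h : gegCoeff n (i + 1) * (2 * i + n) = i + 1 := by
      rw [gegCoeff_succ, div_mul_cancel₀ _ hne]
    simpa [map_ofNat] using congrArg C h
  have hupper : C (1 - gegCoeff n (i + 1)) * (2 * (i : ℝ[X]) + (n : ℝ[X])) =
      (i : ℝ[X]) + (n : ℝ[X]) - 1 := by
    rw [C_sub, C_1, sub_mul, hlower]
    ring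
  linear_combination (-(2 * (i : ℝ[X]) + (n : ℝ[X]))) * X_mul_gegenbauer_succ hn i -
    gegenbauer n (i + 2) * hupper - gegenbauer n i * hlower

theorem one_sub_X_sq_mul_derivative_gegenbauer (hn : 2 ≤ n) (i : ℕ) :
    (1 - X ^ 2) * derivative (gegenbauer n (i + 1)) =
        ((i : ℝ[X]) + 1) * (gegenbauer n i - X * gegenbauer n (i + 1)) ∧
      (1 - X ^ 2) * derivative (gegenbauer n i) =
        ((i : ℝ[X]) + (n : ℝ[X]) - 2) * (X * gegenbauer n i - gegenbauer n (i + 1)) := by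
  induction i with
  | zero => simp [gegenbauer_zero, gegenbauer_one, sq]
  | succ i ih =>
    obtain ⟨hlower, hraise⟩ := ih
    have hrec := gegenbauer_recurrence hn i
    refine ⟨?_, by rw [hlower]; push_cast; linear_combination hrec⟩
    have hne : (i : ℝ[X]) + (n : ℝ[X]) - 1 ≠ 0 := by
      have h : ((i + n - 1 : ℕ) : ℝ[X]) ≠ 0 := Nat.cast_ne_zero.2 (by omega)
      rwa [Nat.cast_sub (by omega), Nat.cast_add, Nat.cast_one] at h
    have hrec' := congrArg derivative hrec
    simp only [derivative_mul, derivative_sub, derivative_add, derivative_X, derivative_natCast,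
      derivative_one, derivative_ofNat] at hrec'
    refine mul_left_cancel₀ hne ?_
    push_cast
    linear_combination (1 - X ^ 2) * hrec' + (2 * (i : ℝ[X]) + (n : ℝ[X])) * X * hlower -
      ((i : ℝ[X]) + 1) * hraise + ((i : ℝ[X]) + 2) * X * hrec

/-- The Gegenbauer differential operator, the polar part of the Laplacian of the sphere
`S^(n-1)`. -/
noncomputable def gegOperator (n : ℕ) (p : ℝ[X]) : ℝ[X] :=
  (1 - X ^ 2) * derivative (derivative p) - ((n : ℝ[X]) - 1) * X * derivative p

theorem gegOperator_gegenbauer (hn : 2 ≤ n) (i : ℕ) :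
    gegOperator n (gegenbauer n i) = C (-((i : ℝ) * (i + n - 2))) * gegenbauer n i := by
  have hC : C (-((i : ℝ) * (i + n - 2))) = -((i : ℝ[X]) * ((i : ℝ[X]) + (n : ℝ[X]) - 2)) := by
    simp [map_ofNat]
  rw [gegOperator, hC]
  rcases i with _ | i
  · simp [gegenbauer_zero]
  obtain ⟨hlower, hraise⟩ := one_sub_X_sq_mul_derivative_gegenbauer hn i
  have hlower' := congrArg derivative hlower
  simp only [derivative_mul, derivative_sub, derivative_add, derivative_X, derivative_natCast,
    derivative_one, derivative_X_sq, map_ofNat] at hlower'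
  have hne : (1 - X ^ 2 : ℝ[X]) ≠ 0 := fun h => by simpa using congrArg (eval 0) h
  refine mul_left_cancel₀ hne ?_
  push_cast
  linear_combination (1 - X ^ 2) * hlower' + ((i : ℝ[X]) + 1) * hraise +
    (-((n : ℝ[X]) - 3) * X - ((i : ℝ[X]) + 1) * X) * hlower

theorem gegFunctional_mul_gegOperator (hn : 2 ≤ n) (p q : ℝ[X]) :
    gegFunctional hn (q * gegOperator n p) =
      -gegFunctional hn ((1 - X ^ 2) * (derivative p * derivative q)) := by
  have hsplit : (1 - X ^ 2) * derivative (derivative p * q) -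
        C ((n : ℝ) - 1) * (X * (derivative p * q)) =
      q * gegOperator n p + (1 - X ^ 2) * (derivative p * derivative q) := by
    rw [gegOperator, derivative_mul, C_sub, C_1, C_eq_natCast]
    ring
  have hpearson := gegFunctional_pearson hn (derivative p * q)
  rw [← map_C_mul, ← sub_eq_zero, ← map_sub, hsplit, map_add] at hpearson
  exact eq_neg_of_add_eq_zero_left hpearson

theorem gegFunctional_gegenbauer_mul_eq_zero (hn : 2 ≤ n) {i j : ℕ} (hij : i ≠ j) :
    gegFunctional hn (gegenbauer n i * gegenbauer n j) = 0 := by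
  have hsymm : gegFunctional hn (gegenbauer n i * gegOperator n (gegenbauer n j)) =
      gegFunctional hn (gegenbauer n j * gegOperator n (gegenbauer n i)) := by
    rw [gegFunctional_mul_gegOperator, gegFunctional_mul_gegOperator, mul_comm (derivative _)]
  rw [gegOperator_gegenbauer hn, gegOperator_gegenbauer hn, mul_left_comm, map_C_mul,
    mul_left_comm (gegenbauer n j), map_C_mul, mul_comm (gegenbauer n j)] at hsymm
  have hn₂ : (2 : ℝ) ≤ n := by exact_mod_cast hn
  have hsub : (i : ℝ) - j ≠ 0 := sub_ne_zero.2 (by exact_mod_cast hij)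
  have hadd : (i : ℝ) + j + n - 2 ≠ 0 := by
    have : (1 : ℝ) ≤ (i + j : ℕ) := by exact_mod_cast (by omega : 1 ≤ i + j)
    push_cast at this
    linarith
  refine (mul_eq_zero.1 ?_).resolve_left (mul_ne_zero hsub hadd)
  linear_combination hsymm

theorem isOrthogonalSystem_gegenbauer (hn : 2 ≤ n) (m : ℕ) :
    IsOrthogonalSystem (gegFunctional hn) m (gegenbauer n) :=
  ⟨fun i _ => natDegree_gegenbauer_le i, fun i _ => coeff_gegenbauer_pos hn i,
    fun _ _ _ hij => gegFunctional_gegenbauer_mul_eq_zero hn hij.ne⟩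

theorem IsGegenbauer.eq_gegenbauer (hn : 2 ≤ n) {P : ℕ → ℝ[X]} (hP : IsGegenbauer n P) :
    P = gegenbauer n := by
  obtain ⟨hdeg, heval, horth⟩ := hP
  funext i
  induction i using Nat.strong_induction_on with
  | _ i ih =>
    have hG := isOrthogonalSystem_gegenbauer hn (i + 1)
    have hsum := hG.eq_sum (strictlyPositive_gegFunctional hn _)
      (natDegree_le_iff_degree_lt_succ.1 (hdeg i).le)
    rw [sum_range_succ, sum_eq_zero, zero_add] at hsum
    · have hone := congrArg (eval 1) hsum
      rw [heval, eval_smul, eval_one_gegenbauer hn, smul_eq_mul, mul_one] at hone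
      rwa [← hone, one_smul] at hsum
    · intro l hl
      have hl := mem_range.1 hl
      rw [← ih l hl, gegFunctional_apply]
      simp only [eval_mul]
      rw [horth i l hl.ne', zero_div, zero_smul]

end Gegenbauer

section Dimensions

variable {n : ℕ}

/-- The dimension of the space of homogeneous polynomials of degree `i` in `n` variables. -/
noncomputable def homDim (n i : ℕ) : ℝ := (n + i - 1).choose (n - 1)

/-- The dimension of the space of harmonic homogeneous polynomials of degree `i` in `n`
variables. -/
noncomputable def harmDim (n : ℕ) : ℕ → ℝ
  | 0 => homDim n 0
  | 1 => homDim n 1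
  | i + 2 => homDim n (i + 2) - homDim n i

theorem homDim_zero (n : ℕ) : homDim n 0 = 1 := by simp [homDim]

theorem homDim_pos (n i : ℕ) : 0 < homDim n i := Nat.cast_pos.2 (Nat.choose_pos (by omega))

theorem homDim_monotone (n : ℕ) : Monotone (homDim n) := fun _ _ hij =>
  Nat.cast_le.2 (Nat.choose_le_choose _ (by omega))

theorem homDim_succ_mul (hn : 2 ≤ n) (i : ℕ) :
    homDim n (i + 1) * (i + 1) = (n + i) * homDim n i := by
  have h : ((n - 1 + i).choose (n - 1) : ℝ) * ((n - 1 + i : ℕ) + 1) =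
      (n - 1 + i + 1).choose (n - 1) * (n - 1 + i + 1 - (n - 1) : ℕ) := by
    exact_mod_cast Nat.choose_mul_succ_eq (n - 1 + i) (n - 1)
  rw [show n - 1 + i + 1 - (n - 1) = i + 1 by omega, Nat.cast_add, Nat.cast_sub (by omega)] at h
  rw [homDim, homDim, show n + (i + 1) - 1 = n - 1 + i + 1 by omega,
    show n + i - 1 = n - 1 + i by omega]
  push_cast at h ⊢
  linear_combination -h

theorem harmDim_succ_mul (hn : 2 ≤ n) (i : ℕ) :
    harmDim n (i + 1) * ((i + 1) * (n + i - 1)) = homDim n i * ((2 * i + n) * (n - 1)) := by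
  rcases i with _ | i
  · have h₁ := homDim_succ_mul hn 0
    rw [harmDim]
    push_cast at h₁ ⊢
    linear_combination ((n : ℝ) - 1) * h₁
  · have h₁ := homDim_succ_mul hn i
    have h₂ := homDim_succ_mul hn (i + 1)
    rw [harmDim]
    push_cast at h₂ ⊢
    linear_combination ((n : ℝ) + i) * h₂ + ((i : ℝ) + 2) * h₁

theorem harmDim_pos (hn : 2 ≤ n) : ∀ i, 0 < harmDim n i
  | 0 => homDim_pos n 0
  | i + 1 => by
    have hn₂ : (2 : ℝ) ≤ n := by exact_mod_cast hn
    have : (0 : ℝ) ≤ i := i.cast_nonneg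
    have hpos : 0 < harmDim n (i + 1) * ((i + 1) * (n + i - 1)) := by
      rw [harmDim_succ_mul hn]
      exact mul_pos (homDim_pos n i) (mul_pos (by linarith) (by linarith))
    exact pos_of_mul_pos_left hpos (mul_pos (by linarith) (by linarith)).le

theorem gegCoeff_mul_harmDim_mul (hn : 2 ≤ n) (i : ℕ) :
    gegCoeff n (i + 1) * harmDim n (i + 1) * (n + i - 1) = homDim n i * (n - 1) := by
  have : (2 * i + n : ℝ) ≠ 0 := by positivity
  rw [gegCoeff_succ]
  field_simp
  linear_combination harmDim_succ_mul hn i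

theorem one_sub_gegCoeff_mul_harmDim_mul (hn : 2 ≤ n) (i : ℕ) :
    (1 - gegCoeff n (i + 1)) * harmDim n (i + 1) * (i + 1) = homDim n i * (n - 1) := by
  have : (2 * i + n : ℝ) ≠ 0 := by positivity
  rw [gegCoeff_succ]
  field_simp
  linear_combination harmDim_succ_mul hn i

theorem gegCoeff_mul_harmDim_succ (hn : 2 ≤ n) (i : ℕ) :
    gegCoeff n (i + 1) * harmDim n (i + 1) = (1 - gegCoeff n i) * harmDim n i := by
  have hn₂ : (2 : ℝ) ≤ n := by exact_mod_cast hn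
  have h := gegCoeff_mul_harmDim_mul hn i
  rcases i with _ | i
  · refine mul_right_cancel₀ (b := (n - 1 : ℝ)) (by linarith) ?_
    rw [gegCoeff_zero, harmDim.eq_1]
    push_cast at h
    linear_combination h
  · have h' := one_sub_gegCoeff_mul_harmDim_mul hn i
    have : (0 : ℝ) ≤ i := i.cast_nonneg
    refine mul_right_cancel₀ (b := ((n + i) * (i + 1) : ℝ)) (by positivity) ?_
    push_cast at h
    linear_combination (i + 1) * h - (n + i : ℝ) * h' + (n - 1 : ℝ) * homDim_succ_mul hn i

theorem one_sub_gegCoeff_mul_gegFunctional_sq (hn : 2 ≤ n) (i : ℕ) :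
    (1 - gegCoeff n i) * gegFunctional hn (gegenbauer n (i + 1) * gegenbauer n (i + 1)) =
      gegCoeff n (i + 1) * gegFunctional hn (gegenbauer n i * gegenbauer n i) := by
  have hlower : gegFunctional hn (X * gegenbauer n (i + 1) * gegenbauer n i) =
      gegCoeff n (i + 1) * gegFunctional hn (gegenbauer n i * gegenbauer n i) := by
    rw [X_mul_gegenbauer_succ hn, add_mul, map_add, mul_assoc, map_C_mul,
      gegFunctional_gegenbauer_mul_eq_zero hn (by omega), mul_zero, zero_add, mul_assoc, map_C_mul]
  rw [← hlower, mul_right_comm]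
  rcases i with _ | i
  · rw [gegCoeff_zero, gegenbauer_zero, gegenbauer_one, mul_one, sub_zero, one_mul]
  · rw [X_mul_gegenbauer_succ hn, add_mul, map_add, mul_assoc, map_C_mul, mul_assoc, map_C_mul,
      gegFunctional_gegenbauer_mul_eq_zero hn (by omega : i ≠ i + 1 + 1), mul_zero, add_zero]

theorem harmDim_mul_gegFunctional_sq (hn : 2 ≤ n) (i : ℕ) :
    harmDim n i * gegFunctional hn (gegenbauer n i * gegenbauer n i) = 1 := by
  induction i with
  | zero => rw [harmDim, homDim_zero, gegenbauer_zero, mul_one, one_mul, gegFunctional_one]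
  | succ i ih =>
    refine mul_left_cancel₀ (one_sub_gegCoeff_pos hn i).ne' ?_
    linear_combination harmDim n (i + 1) * one_sub_gegCoeff_mul_gegFunctional_sq hn i +
      gegFunctional hn (gegenbauer n i * gegenbauer n i) * gegCoeff_mul_harmDim_succ hn i +
      (1 - gegCoeff n i) * ih

end Dimensions

section Linearization

variable {A : Type*} [CommRing A]

-- Szwarc's criterion: the recurrences in the two indices make `(i, j) ↦ g i * g j` a solution of a
-- discrete wave equation, and solving it expresses `g (e + J) * g J` through products with a
-- smaller second factor; the coefficients are nonnegative when `a` is monotone with values in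
-- `[0, 1/2]`.
theorem szwarc_identity {a g : ℕ → A} {x : A} (ha : a 0 = 0) (h₀ : x * g 0 = a 1 * g 1)
    (h : ∀ i, x * g (i + 1) = a (i + 2) * g (i + 2) + (1 - a i) * g i) (J : ℕ) : ∀ e : ℕ,
    a J * (g (e + J) * g J) =
        ∑ y ∈ range J, (a (e + 2 * J - y) - a y) * (g (e + 2 * J - y) * g y) +
          ∑ y ∈ range J, (1 - a (e + y) - a y) * (g (e + y) * g y) ∧
      a (J + 1) * (g (e + (J + 1)) * g (J + 1)) =
        ∑ y ∈ range (J + 1), (a (e + 2 * (J + 1) - y) - a y) * (g (e + 2 * (J + 1) - y) * g y) +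
          ∑ y ∈ range (J + 1), (1 - a (e + y) - a y) * (g (e + y) * g y) := by
  induction J with
  | zero =>
    intro e
    simp only [zero_add, range_zero, sum_empty, sum_range_one, ha, zero_mul, sub_zero, add_zero,
      mul_one, true_and]
    linear_combination g 0 * h e - g (e + 1) * h₀
  | succ J ih =>
    intro e
    refine ⟨(ih e).2, ?_⟩
    have hJ := (ih (e + 2)).1
    have hJ₁ := (ih (e + 2)).2
    have hJ₂ := (ih e).2
    have hx := h (e + J + 1)
    have hy := h J
    rw [sum_range_succ _ (J + 1), sum_range_succ _ (J + 1)]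
    rw [sum_range_succ (fun y => (1 - a (e + 2 + y) - a y) * (g (e + 2 + y) * g y)) J] at hJ₁
    rw [sum_range_succ (fun y => (a (e + 2 * (J + 1) - y) - a y) *
      (g (e + 2 * (J + 1) - y) * g y)) J] at hJ₂
    simp only [show e + 2 * (J + 1 + 1) = e + 2 * J + 4 by ring,
      show e + 2 + 2 * (J + 1) = e + 2 * J + 4 by ring,
      show e + 2 * (J + 1) = e + 2 * J + 2 by ring, show e + 2 + 2 * J = e + 2 * J + 2 by ring,
      show e + 2 * J + 4 - (J + 1) = e + J + 3 by omega,
      show e + 2 * J + 2 - J = e + J + 2 by omega, show e + (J + 1 + 1) = e + J + 2 by ring,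
      show e + 2 + (J + 1) = e + J + 3 by ring, show e + 2 + J = e + J + 2 by ring,
      show e + (J + 1) = e + J + 1 by ring, show e + J + 1 + 2 = e + J + 3 by ring,
      show e + J + 1 + 1 = e + J + 2 by ring, show J + 1 + 1 = J + 2 by ring] at *
    linear_combination g (J + 1) * hx - g (e + J + 2) * hy + hJ₁ + hJ₂ - hJ

theorem mul_mem_hull_of_recurrence [Algebra ℝ A] {a : ℕ → ℝ} {g : ℕ → A} {x : A} (ha : a 0 = 0)
    (hpos : ∀ i, 0 < a (i + 1)) (hmono : Monotone a) (hhalf : ∀ i, a i ≤ 1 / 2) (hg : g 0 = 1)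
    (h₀ : x * g 0 = a 1 • g 1)
    (h : ∀ i, x * g (i + 1) = a (i + 2) • g (i + 2) + (1 - a i) • g i) (J e : ℕ) :
    g (e + J) * g J ∈ PointedCone.hull ℝ (Set.range g) := by
  induction J using Nat.strong_induction_on generalizing e with
  | _ J ih =>
    rcases J with _ | J
    · rw [hg, mul_one]
      exact PointedCone.subset_hull ⟨e, rfl⟩
    have hid := (szwarc_identity (a := fun i => algebraMap ℝ A (a i)) (by rw [ha, map_zero])
      (by rw [h₀, Algebra.smul_def]) (by simpa [Algebra.smul_def] using h) (J + 1) e).1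
    simp only [← map_one (algebraMap ℝ A), ← map_sub, ← Algebra.smul_def] at hid
    have hmem : a (J + 1) • (g (e + (J + 1)) * g (J + 1)) ∈ PointedCone.hull ℝ (Set.range g) := by
      rw [hid]
      refine add_mem (sum_mem fun y hy => ?_) (sum_mem fun y hy => ?_)
      · have hy := mem_range.1 hy
        refine PointedCone.smul_mem _ (sub_nonneg.2 (hmono (by omega))) ?_
        have := ih y hy (e + 2 * (J + 1) - y - y)
        rwa [Nat.sub_add_cancel (by omega)] at this
      · refine PointedCone.smul_mem _ ?_ (ih y (mem_range.1 hy) e)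
        linarith [hhalf y, hhalf (e + y)]
    rw [← inv_smul_smul₀ (hpos J).ne' (g (e + (J + 1)) * g (J + 1))]
    exact PointedCone.smul_mem _ (inv_pos.2 (hpos J)).le hmem

theorem mul_mem_hull [Algebra ℝ A] {s : Set A}
    (hs : ∀ x ∈ s, ∀ y ∈ s, x * y ∈ PointedCone.hull ℝ s) {x y : A}
    (hx : x ∈ PointedCone.hull ℝ s) (hy : y ∈ PointedCone.hull ℝ s) :
    x * y ∈ PointedCone.hull ℝ s := by
  induction hx, hy using Submodule.span_induction₂ with
  | mem_mem x y hx hy => exact hs x hx y hy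
  | zero_left y _ => rw [zero_mul]; exact zero_mem _
  | zero_right x _ => rw [mul_zero]; exact zero_mem _
  | add_left x y z _ _ _ hx hy => rw [add_mul]; exact add_mem hx hy
  | add_right x y z _ _ _ hy hz => rw [mul_add]; exact add_mem hy hz
  | smul_left r x y _ _ h => rw [smul_mul_assoc]; exact Submodule.smul_mem _ r h
  | smul_right r x y _ _ h => rw [mul_smul_comm]; exact Submodule.smul_mem _ r h

end Linearization

section PosDefCone

variable {n : ℕ}

/-- The cone of positive definite polynomials with nonnegative mean, as the conic hull of the
Gegenbauer polynomials. -/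
noncomputable def posDefCone (n : ℕ) : PointedCone ℝ ℝ[X] :=
  PointedCone.hull ℝ (Set.range (gegenbauer n))

theorem gegenbauer_mem_posDefCone (i : ℕ) : gegenbauer n i ∈ posDefCone n :=
  PointedCone.subset_hull ⟨i, rfl⟩

theorem gegFunctional_mul_gegenbauer_nonneg (hn : 2 ≤ n) {f : ℝ[X]} (hf : f ∈ posDefCone n)
    (l : ℕ) : 0 ≤ gegFunctional hn (f * gegenbauer n l) := by
  induction hf using Submodule.span_induction with
  | mem f hf =>
    obtain ⟨i, rfl⟩ := hf
    rcases eq_or_ne i l with rfl | hil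
    · exact (strictlyPositive_gegFunctional hn (i + 1)).apply_mul_self_nonneg
        (natDegree_le_iff_degree_lt_succ.1 (natDegree_gegenbauer_le i))
    · exact (gegFunctional_gegenbauer_mul_eq_zero hn hil).ge
  | zero => simp
  | add f g _ _ hf hg => rw [add_mul, map_add]; exact add_nonneg hf hg
  | smul r f _ hf =>
    rw [smul_mul_assoc, ← Nonneg.coe_smul, map_smul]
    exact smul_nonneg r.2 hf

theorem mem_posDefCone (hn : 2 ≤ n) {m : ℕ} {f : ℝ[X]} (hf : f.degree < m)
    (h : ∀ l < m, 0 ≤ gegFunctional hn (f * gegenbauer n l)) : f ∈ posDefCone n :=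
  Submodule.span_mono (Set.image_subset_range _ _) <|
    (isOrthogonalSystem_gegenbauer hn m).mem_hull (strictlyPositive_gegFunctional hn m) hf h

theorem gegenbauer_mul_mem_posDefCone (hn : 2 ≤ n) (i j : ℕ) :
    gegenbauer n i * gegenbauer n j ∈ posDefCone n := by
  wlog hij : j ≤ i generalizing i j
  · rw [mul_comm]
    exact this j i (le_of_not_ge hij)
  set g : ℕ → ℝ[X] := fun i => harmDim n i • gegenbauer n i with hg
  have hrec : ∀ i, X * g (i + 1) =
      gegCoeff n (i + 2) • g (i + 2) + (1 - gegCoeff n i) • g i := by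
    intro i
    simp only [hg, smul_smul]
    rw [gegCoeff_mul_harmDim_succ hn, ← gegCoeff_mul_harmDim_succ hn i, mul_smul_comm,
      X_mul_gegenbauer_succ hn]
    simp only [smul_eq_C_mul, C_mul]
    ring
  have hmem := mul_mem_hull_of_recurrence (gegCoeff_zero n) (gegCoeff_succ_pos hn)
    (gegCoeff_monotone hn) (gegCoeff_le_half hn)
    (by simp [hg, gegenbauer_zero, harmDim, homDim_zero]) ?_ hrec j (i - j)
  · rw [Nat.sub_add_cancel hij] at hmem
    have hpos := mul_pos (harmDim_pos hn i) (harmDim_pos hn j)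
    rw [← inv_smul_smul₀ hpos.ne' (gegenbauer n i * gegenbauer n j), ← smul_mul_smul_comm]
    refine PointedCone.smul_mem _ (inv_pos.2 hpos).le (Submodule.span_le.2 ?_ hmem)
    rintro _ ⟨l, rfl⟩
    exact PointedCone.smul_mem _ (harmDim_pos hn l).le (gegenbauer_mem_posDefCone l)
  · simp only [hg, smul_smul, gegCoeff_mul_harmDim_succ hn, gegCoeff_zero, gegenbauer_zero,
      gegenbauer_one, sub_zero, one_mul, mul_smul_comm, mul_one]

theorem mul_mem_posDefCone (hn : 2 ≤ n) {f g : ℝ[X]} (hf : f ∈ posDefCone n)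
    (hg : g ∈ posDefCone n) : f * g ∈ posDefCone n :=
  mul_mem_hull (by rintro _ ⟨i, rfl⟩ _ ⟨j, rfl⟩; exact gegenbauer_mul_mem_posDefCone hn i j) hf hg

end PosDefCone

section ParityKernel

variable {n : ℕ}

/-- The reproducing kernel at `1`, for `μ_n`, of the polynomials of degree at most `m` with the
parity of `m`. These kernels are orthogonal polynomials for the weight `1 - t²` times `μ_n`. -/
noncomputable def parityKernel (n : ℕ) : ℕ → ℝ[X]
  | 0 => gegenbauer n 0
  | 1 => harmDim n 1 • gegenbauer n 1
  | m + 2 => parityKernel n m + harmDim n (m + 2) • gegenbauer n (m + 2)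

theorem natDegree_parityKernel_le (m : ℕ) : (parityKernel n m).natDegree ≤ m := by
  induction m using Nat.twoStepInduction with
  | zero => exact natDegree_gegenbauer_le 0
  | one => exact (natDegree_smul_le _ _).trans (natDegree_gegenbauer_le 1)
  | more m ih _ =>
    exact natDegree_add_le_of_degree_le (ih.trans (by omega))
      ((natDegree_smul_le _ _).trans (natDegree_gegenbauer_le _))

theorem degree_parityKernel_lt (m : ℕ) : (parityKernel n m).degree < (m + 1 : ℕ) :=
  natDegree_le_iff_degree_lt_succ.1 (natDegree_parityKernel_le m)

theorem coeff_parityKernel_pos (hn : 2 ≤ n) (m : ℕ) : 0 < (parityKernel n m).coeff m := by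
  have hsmul : ∀ i, 0 < (harmDim n i • gegenbauer n i).coeff i := fun i => by
    rw [coeff_smul]
    exact mul_pos (harmDim_pos hn i) (coeff_gegenbauer_pos hn i)
  match m with
  | 0 => exact coeff_gegenbauer_pos hn 0
  | 1 => exact hsmul 1
  | m + 2 =>
    rw [parityKernel, coeff_add, coeff_eq_zero_of_natDegree_lt
      ((natDegree_parityKernel_le m).trans_lt (by omega)), zero_add]
    exact hsmul (m + 2)

theorem parityKernel_mem_posDefCone (hn : 2 ≤ n) (m : ℕ) : parityKernel n m ∈ posDefCone n := by
  have hsmul : ∀ i, harmDim n i • gegenbauer n i ∈ posDefCone n := fun i =>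
    PointedCone.smul_mem _ (harmDim_pos hn i).le (gegenbauer_mem_posDefCone i)
  induction m using Nat.twoStepInduction with
  | zero => exact gegenbauer_mem_posDefCone 0
  | one => exact hsmul 1
  | more m ih _ => exact add_mem ih (hsmul (m + 2))

theorem eval_one_parityKernel (hn : 2 ≤ n) (m : ℕ) :
    (parityKernel n m).eval 1 = homDim n m := by
  induction m using Nat.twoStepInduction with
  | zero => simp [parityKernel, eval_one_gegenbauer hn, homDim_zero]
  | one => simp [parityKernel, eval_one_gegenbauer hn, harmDim]
  | more m ih _ => simp [parityKernel, eval_one_gegenbauer hn, harmDim, ih]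

theorem eval_neg_one_parityKernel (hn : 2 ≤ n) (m : ℕ) :
    (parityKernel n m).eval (-1) = (-1) ^ m * homDim n m := by
  induction m using Nat.twoStepInduction with
  | zero => simp [parityKernel, eval_neg_one_gegenbauer hn, homDim_zero]
  | one => simp [parityKernel, eval_neg_one_gegenbauer hn, harmDim]
  | more m ih _ =>
    simp only [parityKernel, eval_add, eval_smul, ih, eval_neg_one_gegenbauer hn, harmDim,
      smul_eq_mul]
    ring

theorem gegFunctional_parityKernel_mul_gegenbauer (hn : 2 ≤ n) (m j : ℕ) :
    gegFunctional hn (parityKernel n m * gegenbauer n j) =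
      if j ≤ m ∧ Even (m + j) then 1 else 0 := by
  have hsmul : ∀ i, gegFunctional hn (harmDim n i • gegenbauer n i * gegenbauer n j) =
      if i = j then 1 else 0 := fun i => by
    rw [smul_mul_assoc, map_smul, smul_eq_mul]
    split_ifs with hij
    · rw [← hij, harmDim_mul_gegFunctional_sq hn]
    · rw [gegFunctional_gegenbauer_mul_eq_zero hn hij, mul_zero]
  induction m using Nat.twoStepInduction with
  | zero =>
    have h₀ := hsmul 0
    rw [harmDim, homDim_zero, one_smul] at h₀
    rw [parityKernel, h₀]
    congr 1
    grind
  | one =>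
    rw [parityKernel, hsmul 1]
    congr 1
    grind
  | more m ih _ =>
    rw [parityKernel, add_mul, map_add, ih, hsmul]
    grind

theorem gegFunctional_parityKernel_mul (hn : 2 ≤ n) {m : ℕ} {g : ℝ[X]}
    (hg : g.degree < (m + 2 : ℕ)) :
    gegFunctional hn (parityKernel n m * g) = (g.eval 1 + (-1) ^ m * g.eval (-1)) / 2 := by
  refine LinearMap.eqOn_span (f := mulFunctional (parityKernel n m) (gegFunctional hn))
    (g := (2 : ℝ)⁻¹ • (leval 1 + (-1 : ℝ) ^ m • leval (-1))) ?_
    ((isOrthogonalSystem_gegenbauer hn (m + 2)).mem_span_of_degree_lt hg) |>.trans ?_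
  · rintro _ ⟨j, hj, rfl⟩
    rw [mulFunctional_apply, gegFunctional_parityKernel_mul_gegenbauer hn]
    have := Set.mem_Iio.1 hj
    simp only [LinearMap.smul_apply, LinearMap.add_apply, leval_apply, eval_one_gegenbauer hn,
      eval_neg_one_gegenbauer hn, smul_eq_mul, ← pow_add]
    split_ifs with h
    · rw [h.2.neg_one_pow]; norm_num
    · rw [Odd.neg_one_pow (by grind)]; norm_num
  · simp only [LinearMap.smul_apply, LinearMap.add_apply, leval_apply, smul_eq_mul]
    ring

theorem gegFunctional_parityKernel_sq (hn : 2 ≤ n) (m : ℕ) :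
    gegFunctional hn (parityKernel n m * parityKernel n m) = homDim n m := by
  rw [gegFunctional_parityKernel_mul hn ((degree_parityKernel_lt m).trans
    (by exact_mod_cast Nat.lt_succ_self _)), eval_one_parityKernel hn,
    eval_neg_one_parityKernel hn, ← mul_assoc, ← mul_pow]
  norm_num

end ParityKernel

section AbsolutelyMonotone

variable {f : ℝ → ℝ} {a b t : ℝ}

theorem iteratedDerivWithin_of_subset {s u : Set ℝ} {m : ℕ} (hsu : s ⊆ u) (hs : UniqueDiffOn ℝ s)
    (hu : UniqueDiffOn ℝ u) (hf : ContDiffOn ℝ m f u) (ht : t ∈ s) :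
    iteratedDerivWithin m f s t = iteratedDerivWithin m f u t := by
  rw [iteratedDerivWithin_eq_iteratedFDerivWithin, iteratedDerivWithin_eq_iteratedFDerivWithin,
    iteratedFDerivWithin_subset hsu hs hu hf ht]

theorem sub_sum_taylor_eq_integral (hf : ContDiffOn ℝ (⊤ : ℕ∞) f (Set.Ico a b)) (hat : a < t)
    (htb : t < b) (M : ℕ) :
    f t - ∑ k ∈ range (M + 1), iteratedDerivWithin k f (Set.Ico a b) a / k.factorial * (t - a) ^ k =
      ∫ s in a..t, (t - s) ^ M / M.factorial *
        iteratedDerivWithin (M + 1) f (Set.Ico a b) s := by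
  have hsub : Set.uIcc a t ⊆ Set.Ico a b := by
    rw [Set.uIcc_of_le hat.le]
    exact Set.Icc_subset_Ico_right htb
  have hderiv : ∀ k, ∀ s ∈ Set.uIcc a t, iteratedDerivWithin k f (Set.uIcc a t) s =
      iteratedDerivWithin k f (Set.Ico a b) s := fun k s hs =>
    iteratedDerivWithin_of_subset hsub (uniqueDiffOn_uIcc hat.ne) (uniqueDiffOn_Ico a b)
      (hf.of_le (by exact_mod_cast le_top)) hs
  have htaylor := taylor_integral_remainder (n := M)
    ((hf.mono hsub).of_le (by exact_mod_cast le_top))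
  rw [taylor_within_apply] at htaylor
  calc _ = _ := ?_
    _ = _ := htaylor
    _ = _ := intervalIntegral.integral_congr fun s hs => by
      simp only [hderiv _ s hs, smul_eq_mul]
  congr 1
  refine sum_congr rfl fun k _ => ?_
  rw [hderiv k a Set.left_mem_uIcc, smul_eq_mul]
  ring

theorem sub_sum_taylor_le (hf : AbsolutelyMonotoneOn f (Set.Ico a b)) {c : ℝ} (hat : a < t)
    (htc : t ≤ c) (hcb : c < b) (M : ℕ) :
    f t - ∑ k ∈ range (M + 1), iteratedDerivWithin k f (Set.Ico a b) a / k.factorial *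
        (t - a) ^ k ≤
      ((t - a) / (c - a)) ^ M * f c := by
  have hac : a < c := hat.trans_le htc
  have ht : t ∈ Set.Ico a b := ⟨hat.le, htc.trans_lt hcb⟩
  set D := fun k => iteratedDerivWithin k f (Set.Ico a b)
  have hD : ∀ k, ∀ s ∈ Set.Ico a b, 0 ≤ D k s := fun k s hs =>
    hf.iteratedDerivWithin_nonneg (uniqueDiffOn_Ico a b) k hs
  have hcont : ContinuousOn (D (M + 1)) (Set.Ico a b) :=
    hf.contDiffOn.continuousOn_iteratedDerivWithin (by exact_mod_cast le_top)
      (uniqueDiffOn_Ico a b)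
  have hint : ∀ u, ∀ v ∈ Set.Ico a b, IntervalIntegrable
      (fun s => (u - s) ^ M / M.factorial * D (M + 1) s) volume a v := fun u v hv =>
    ContinuousOn.intervalIntegrable <| ContinuousOn.mul (by fun_prop) <| hcont.mono <| by
      rw [Set.uIcc_of_le hv.1]
      exact Set.Icc_subset_Ico_right hv.2
  have hremainder : ∫ s in a..c, (c - s) ^ M / M.factorial * D (M + 1) s ≤ f c := by
    rw [← sub_sum_taylor_eq_integral hf.contDiffOn hac hcb, sub_le_self_iff]
    exact sum_nonneg fun k _ => mul_nonneg
      (div_nonneg (hD k a ⟨le_rfl, hac.trans hcb⟩) (by positivity)) (pow_nonneg (by linarith) k)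
  rw [sub_sum_taylor_eq_integral hf.contDiffOn hat (htc.trans_lt hcb)]
  calc ∫ s in a..t, (t - s) ^ M / M.factorial * D (M + 1) s
      ≤ ∫ s in a..t, ((t - a) / (c - a)) ^ M * ((c - s) ^ M / M.factorial * D (M + 1) s) := by
        refine intervalIntegral.integral_mono_on hat.le (hint _ _ ht)
          ((hint _ _ ht).const_mul _) fun s hs => ?_
        rw [← mul_assoc, ← mul_div_assoc, ← mul_pow]
        refine mul_le_mul_of_nonneg_right ?_ (hD _ s ⟨hs.1, by linarith [hs.2]⟩)
        gcongr
        · linarith [hs.2]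
        · rw [div_mul_eq_mul_div, le_div_iff₀ (by linarith)]
          nlinarith [hs.1, hs.2]
    _ = ((t - a) / (c - a)) ^ M * ∫ s in a..t, (c - s) ^ M / M.factorial * D (M + 1) s :=
        intervalIntegral.integral_const_mul _ _
    _ ≤ ((t - a) / (c - a)) ^ M * ∫ s in a..c, (c - s) ^ M / M.factorial * D (M + 1) s := by
        refine mul_le_mul_of_nonneg_left ?_ (pow_nonneg (div_nonneg (by linarith) (by linarith)) M)
        refine intervalIntegral.integral_mono_interval le_rfl hat.le htc ?_ (hint _ _ ⟨hac.le, hcb⟩)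
        filter_upwards [ae_restrict_mem measurableSet_Ioc] with s hs
        exact mul_nonneg (div_nonneg (pow_nonneg (by linarith [hs.2]) M) (by positivity))
          (hD _ s ⟨hs.1.le, by linarith [hs.2]⟩)
    _ ≤ ((t - a) / (c - a)) ^ M * f c :=
        mul_le_mul_of_nonneg_left hremainder (pow_nonneg (div_nonneg (by linarith) (by linarith)) M)

/-- The function `h` is the sum, on `[a, b)`, of a power series centred at `a` with nonnegative
coefficients. -/
def HasNonnegPowerSeriesOn (h : ℝ → ℝ) (a b : ℝ) : Prop :=
  ∃ c : ℕ → ℝ, (∀ j, 0 ≤ c j) ∧ ∀ t ∈ Set.Ico a b, HasSum (fun j => c j * (t - a) ^ j) (h t)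

/-- Bernstein's theorem: the Taylor remainders at `t < c` decay geometrically because
`(t - s) / (c - s) ≤ (t - a) / (c - a)` for `s ∈ [a, t]`. -/
theorem hasNonnegPowerSeriesOn_of_absolutelyMonotoneOn (hab : a < b)
    (hf : AbsolutelyMonotoneOn f (Set.Ico a b)) : HasNonnegPowerSeriesOn f a b := by
  set D := fun k => iteratedDerivWithin k f (Set.Ico a b)
  have hD : ∀ k, 0 ≤ D k a / k.factorial := fun k =>
    div_nonneg (hf.iteratedDerivWithin_nonneg (uniqueDiffOn_Ico a b) k ⟨le_rfl, hab⟩)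
      (by positivity)
  refine ⟨_, hD, fun t ht => ?_⟩
  rcases ht.1.eq_or_lt with rfl | hat
  · convert! hasSum_single (f := fun k => D k a / k.factorial * (a - a) ^ k) 0
      (fun k hk => by simp [hk]) using 1
    simp [D]
  obtain ⟨c, htc, hcb⟩ := exists_between ht.2
  have hdecay : Filter.Tendsto (fun M : ℕ => f t - ((t - a) / (c - a)) ^ M * f c) Filter.atTop
      (nhds (f t)) := by
    have hratio : (t - a) / (c - a) < 1 := (div_lt_one (by linarith)).2 (by linarith)
    simpa using ((tendsto_pow_atTop_nhds_zero_of_lt_one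
      (div_nonneg (by linarith) (by linarith)) hratio).mul_const (f c)).const_sub (f t)
  rw [hasSum_iff_tendsto_nat_of_nonneg fun k => mul_nonneg (hD k) (pow_nonneg (by linarith) k),
    ← Filter.tendsto_add_atTop_iff_nat 1]
  refine tendsto_of_tendsto_of_tendsto_of_le_of_le hdecay tendsto_const_nhds (fun M => ?_)
    fun M => ?_
  · exact sub_le_comm.1 (sub_sum_taylor_le hf hat htc.le hcb M)
  · refine sub_nonneg.1 ?_
    rw [sub_sum_taylor_eq_integral hf.contDiffOn hat ht.2]
    refine intervalIntegral.integral_nonneg hat.le fun s hs => mul_nonneg ?_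
      (hf.iteratedDerivWithin_nonneg (uniqueDiffOn_Ico a b) _ ⟨hs.1, hs.2.trans_lt ht.2⟩)
    exact div_nonneg (pow_nonneg (by linarith [hs.2]) M) (by positivity)

section ShiftedSum

variable {c : ℕ → ℝ} {x y z : ℝ}

/-- The sum of the power series with the shifted coefficients `c i, c (i + 1), …` at `y`. Those with
`i ≥ 1` are the coefficients of the quotient of `∑ c j x ^ j - ∑ c j y ^ j` by `x - y`. -/
noncomputable def shiftedSum (c : ℕ → ℝ) (y : ℝ) (i : ℕ) : ℝ := ∑' j, c (i + j) * y ^ j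

theorem summable_shift (hc : ∀ j, 0 ≤ c j) (hz : Summable fun j => c j * z ^ j) (hz₀ : 0 < z)
    (hy : 0 ≤ y) (hyz : y ≤ z) (i : ℕ) : Summable fun j => c (i + j) * y ^ j := by
  refine Summable.of_nonneg_of_le (fun j => mul_nonneg (hc _) (pow_nonneg hy j)) (fun j => ?_)
    (((summable_nat_add_iff i).2 hz).mul_left (z ^ i)⁻¹)
  calc c (i + j) * y ^ j ≤ c (i + j) * z ^ j := by gcongr; exact hc _
    _ = (z ^ i)⁻¹ * (c (j + i) * z ^ (j + i)) := by
      rw [add_comm j i, pow_add]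
      field_simp

theorem shiftedSum_nonneg (hc : ∀ j, 0 ≤ c j) (hy : 0 ≤ y) (i : ℕ) : 0 ≤ shiftedSum c y i :=
  tsum_nonneg fun _ => mul_nonneg (hc _) (pow_nonneg hy _)

theorem shiftedSum_eq_add (hc : ∀ j, 0 ≤ c j) (hz : Summable fun j => c j * z ^ j) (hz₀ : 0 < z)
    (hy : 0 ≤ y) (hyz : y ≤ z) (i : ℕ) :
    shiftedSum c y i = c i + y * shiftedSum c y (i + 1) := by
  rw [shiftedSum, (summable_shift hc hz hz₀ hy hyz i).tsum_eq_zero_add, shiftedSum,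
    ← tsum_mul_left]
  simp only [add_zero, pow_zero, mul_one]
  congr 2
  ext j
  rw [← add_assoc, add_right_comm i j 1]
  ring

theorem tendsto_shiftedSum_mul_pow (hc : ∀ j, 0 ≤ c j) (hz : Summable fun j => c j * z ^ j)
    (hz₀ : 0 < z) (hy : 0 ≤ y) (hyz : y ≤ z) (hx : 0 ≤ x) (hxz : x ≤ z) :
    Filter.Tendsto (fun n => shiftedSum c y n * x ^ n) Filter.atTop (nhds 0) := by
  refine squeeze_zero (fun n => mul_nonneg (shiftedSum_nonneg hc hy n) (pow_nonneg hx n))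
    (fun n => ?_) (tendsto_sum_nat_add fun j => c j * z ^ j)
  have hshift := summable_shift hc hz hz₀ hy hyz n
  calc shiftedSum c y n * x ^ n = ∑' j, c (n + j) * y ^ j * x ^ n := hshift.tsum_mul_right _ |>.symm
    _ ≤ ∑' j, c (j + n) * z ^ (j + n) := by
      refine (hshift.mul_right _).tsum_le_tsum (fun j => ?_) ((summable_nat_add_iff n).2 hz)
      rw [add_comm n j, pow_add, mul_assoc]
      have := hc (j + n)
      gcongr

theorem tendsto_sub_mul_sum_shiftedSum (hc : ∀ j, 0 ≤ c j) (hz : Summable fun j => c j * z ^ j)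
    (hz₀ : 0 < z) (hy : 0 ≤ y) (hyz : y ≤ z) (hx : 0 ≤ x) (hxz : x ≤ z) :
    Filter.Tendsto (fun n => (x - y) * ∑ i ∈ range n, shiftedSum c y (i + 1) * x ^ i)
      Filter.atTop (nhds (shiftedSum c x 0 - shiftedSum c y 0)) := by
  have htelescope : ∀ n, (x - y) * ∑ i ∈ range n, shiftedSum c y (i + 1) * x ^ i =
      ∑ i ∈ range n, c i * x ^ i + shiftedSum c y n * x ^ n - shiftedSum c y 0 := by
    intro n
    induction n with
    | zero => simp
    | succ n ih =>
      rw [sum_range_succ, sum_range_succ, mul_add, ih]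
      linear_combination x ^ n * shiftedSum_eq_add hc hz hz₀ hy hyz n
  have hsum : HasSum (fun i => c i * x ^ i) (shiftedSum c x 0) := by
    simpa only [shiftedSum, zero_add] using (summable_shift hc hz hz₀ hx hxz 0).hasSum
  simp only [htelescope]
  simpa using (hsum.tendsto_sum_nat.add
    (tendsto_shiftedSum_mul_pow hc hz hz₀ hy hyz hx hxz)).sub_const (shiftedSum c y 0)

theorem summable_shiftedSum_mul_pow (hc : ∀ j, 0 ≤ c j) (hz : Summable fun j => c j * z ^ j)
    (hy : 0 ≤ y) (hyz : y < z) (hx : 0 ≤ x) (hxz : x ≤ z) :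
    Summable fun i => shiftedSum c y (i + 1) * x ^ i := by
  have hz₀ : 0 < z := hy.trans_lt hyz
  have hpos : ∀ i, 0 ≤ shiftedSum c y (i + 1) := fun i => shiftedSum_nonneg hc hy _
  refine Summable.of_nonneg_of_le (fun i => mul_nonneg (hpos i) (pow_nonneg hx i))
    (fun i => mul_le_mul_of_nonneg_left (pow_le_pow_left₀ hx hxz i) (hpos i)) ?_
  have hlim := (tendsto_sub_mul_sum_shiftedSum hc hz hz₀ hy hyz.le hz₀.le le_rfl).const_mul
    (z - y)⁻¹
  simp only [inv_mul_cancel_left₀ (sub_pos.2 hyz).ne'] at hlim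
  exact ((hasSum_iff_tendsto_nat_of_nonneg
    (fun i => mul_nonneg (hpos i) (pow_nonneg hz₀.le i)) _).2 hlim).summable

end ShiftedSum

namespace HasNonnegPowerSeriesOn

theorem nonneg (hf : HasNonnegPowerSeriesOn f a b) (ht : t ∈ Set.Ico a b) : 0 ≤ f t := by
  obtain ⟨c, hc, hsum⟩ := hf
  exact (hsum t ht).nonneg fun j => mul_nonneg (hc j) (pow_nonneg (sub_nonneg.2 ht.1) j)

theorem exists_eq_add_sub_mul (hf : HasNonnegPowerSeriesOn f a b) {u : ℝ} (hu : u ∈ Set.Ico a b) :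
    ∃ g, HasNonnegPowerSeriesOn g a b ∧ ∀ t ∈ Set.Ico a b, f t = f u + (t - u) * g t := by
  obtain ⟨c, hc, hsum⟩ := hf
  have hu₀ : 0 ≤ u - a := sub_nonneg.2 hu.1
  have hf₀ : ∀ t ∈ Set.Ico a b, f t = shiftedSum c (t - a) 0 := fun t ht => by
    simpa only [shiftedSum, zero_add] using (hsum t ht).tsum_eq.symm
  have hv : ∀ t ∈ Set.Ico a b, ∃ v ∈ Set.Ico a b, t < v ∧ u < v := fun t ht => by
    obtain ⟨v, hv, hvb⟩ := exists_between (max_lt ht.2 hu.2)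
    obtain ⟨htv, huv⟩ := max_lt_iff.1 hv
    exact ⟨v, ⟨ht.1.trans htv.le, hvb⟩, htv, huv⟩
  have hg : ∀ t ∈ Set.Ico a b,
      Summable fun i => shiftedSum c (u - a) (i + 1) * (t - a) ^ i := fun t ht => by
    obtain ⟨v, hv, htv, huv⟩ := hv t ht
    exact summable_shiftedSum_mul_pow hc (hsum v hv).summable hu₀ (by linarith)
      (sub_nonneg.2 ht.1) (by linarith)
  refine ⟨fun t => ∑' i, shiftedSum c (u - a) (i + 1) * (t - a) ^ i,
    ⟨_, fun i => shiftedSum_nonneg hc hu₀ _, fun t ht => (hg t ht).hasSum⟩, fun t ht => ?_⟩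
  obtain ⟨v, hv, htv, huv⟩ := hv t ht
  have hlim := tendsto_sub_mul_sum_shiftedSum hc (hsum v hv).summable
    (by linarith [hu.1]) hu₀ (by linarith) (sub_nonneg.2 ht.1) (by linarith)
  have hquot := tendsto_nhds_unique ((hg t ht).hasSum.tendsto_sum_nat.const_mul _) hlim
  rw [sub_sub_sub_cancel_right] at hquot
  rw [hquot, hf₀ t ht, hf₀ u hu]
  ring

end HasNonnegPowerSeriesOn

end AbsolutelyMonotone

section RuleTransfer

variable {L : ℝ[X] →ₗ[ℝ] ℝ} {d : ℕ} {s : Finset ℝ} {ρ : ℝ → ℝ}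

theorem degree_mul_lt {R : Type*} [Semiring R] {f g : R[X]} {a b : ℕ} (hf : f.natDegree ≤ a)
    (hg : g.degree < b) : (f * g).degree < (a + b : ℕ) := by
  rcases b with _ | b
  · have hg₀ : g = 0 := degree_eq_bot.1 (Nat.WithBot.lt_zero_iff.1 (by exact_mod_cast hg))
    rw [hg₀, mul_zero, degree_zero]
    exact WithBot.bot_lt_coe _
  · exact natDegree_le_iff_degree_lt_succ.1
      (natDegree_mul_le_of_le hf (natDegree_le_iff_degree_lt_succ.2 hg))

theorem IsPositiveRule.mulFunctional (h : IsPositiveRule L d s ρ) {w : ℝ[X]} {t : Finset ℝ}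
    {e : ℕ} (hts : t ⊆ s) (hpos : ∀ x ∈ t, 0 < w.eval x) (hzero : ∀ x ∈ s, x ∉ t → w.eval x = 0)
    (he : w.natDegree + e ≤ d) :
    IsPositiveRule (mulFunctional w L) e t fun x => ρ x * w.eval x := by
  refine ⟨fun x hx => mul_pos (h.weight_pos x (hts hx)) (hpos x hx), fun f hf => ?_⟩
  rw [mulFunctional_apply, h.apply_eq _ ((degree_mul_lt le_rfl hf).trans_le (by exact_mod_cast he))]
  simp only [eval_mul, ← mul_assoc]
  exact (sum_subset hts fun x hx hxt => by rw [hzero x hx hxt]; ring).symm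

theorem IsOrthogonalSystem.discreteFunctional {m : ℕ} {p : ℕ → ℝ[X]}
    (hp : IsOrthogonalSystem L m p) (h : IsPositiveRule L d s ρ) (hd : 2 * m ≤ d + 2) :
    IsOrthogonalSystem (discreteFunctional s ρ) m p := by
  refine ⟨hp.natDegree_le, hp.coeff_pos, fun j hj i hij => ?_⟩
  have hdeg : (p i * p j).natDegree ≤ i + j :=
    natDegree_mul_le_of_le (hp.natDegree_le i (hij.trans hj)) (hp.natDegree_le j hj)
  rw [discreteFunctional_apply, ← h.apply_eq, hp.orthogonal j hj i hij]
  exact (natDegree_le_iff_degree_lt_succ.1 hdeg).trans_le (by exact_mod_cast (by omega))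

end RuleTransfer

section Nodes

variable {n : ℕ} {N : ℝ} {d : ℕ} {s : Finset ℝ} {ρ : ℝ → ℝ}

/-- Integration against `μ_n` minus the contribution of the node `1` with weight `1/N`: the
functional that the remaining nodes of a `1/N`-quadrature rule have to reproduce. -/
noncomputable def residualFunctional (hn : 2 ≤ n) (N : ℝ) : ℝ[X] →ₗ[ℝ] ℝ :=
  gegFunctional hn - N⁻¹ • leval 1

theorem residualFunctional_apply (hn : 2 ≤ n) (N : ℝ) (f : ℝ[X]) :
    residualFunctional hn N f = gegFunctional hn f - N⁻¹ * f.eval 1 := rfl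

theorem mulFunctional_residualFunctional (hn : 2 ≤ n) (N : ℝ) (w : ℝ[X]) :
    mulFunctional w (residualFunctional hn N) =
      mulFunctional w (gegFunctional hn) - (N⁻¹ * w.eval 1) • leval 1 := by
  refine LinearMap.ext fun f => ?_
  simp only [mulFunctional_apply, residualFunctional_apply, LinearMap.sub_apply,
    LinearMap.smul_apply, leval_apply, eval_mul, smul_eq_mul, mul_assoc]

theorem IsPositiveRule.gegFunctional_eq {hn : 2 ≤ n}
    (h : IsPositiveRule (residualFunctional hn N) d s ρ) {f : ℝ[X]} (hf : f.degree < d) :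
    gegFunctional hn f = N⁻¹ * f.eval 1 + ∑ x ∈ s, ρ x * f.eval x := by
  rw [← h.apply_eq f hf, residualFunctional_apply, add_sub_cancel]

theorem IsPositiveRule.insert_one {hn : 2 ≤ n}
    (h : IsPositiveRule (residualFunctional hn N) d s ρ) (hN : 0 < N) (hs : 1 ∉ s) :
    IsPositiveRule (gegFunctional hn) d (insert 1 s) (Function.update ρ 1 N⁻¹) :=
  isPositiveRule_insert hs h.weight_pos (inv_pos.2 hN) fun _ hf => h.gegFunctional_eq hf

theorem strictlyPositive_mulFunctional_residualFunctional (hn : 2 ≤ n) (N : ℝ) (k : ℕ) {w : ℝ[X]}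
    (hw : w ≠ 0) (hw₁ : w.eval 1 = 0) (h : ∀ t ∈ Set.Icc (-1 : ℝ) 1, 0 ≤ w.eval t) :
    StrictlyPositive (mulFunctional w (residualFunctional hn N)) k := by
  rw [mulFunctional_residualFunctional, hw₁, mul_zero, zero_smul, sub_zero]
  exact strictlyPositive_mulFunctional_gegFunctional hn k hw h

/-- The nodal polynomials of `s` and of all its proper initial segments lie in the cone `K`. -/
structure PrefixNodalsMem (s : Finset ℝ) (K : PointedCone ℝ ℝ[X]) : Prop where
  prefix_mem : ∀ y ∈ s, prefixNodal s y ∈ K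
  nodal_mem : Lagrange.nodal s id ∈ K

theorem isReproducingAt_parityKernel (hn : 2 ≤ n) (m : ℕ) :
    IsReproducingAt (mulFunctional (X - C (-1)) (gegFunctional hn)) (m + 1) 1
      (parityKernel n m) := by
  refine ⟨degree_parityKernel_lt m, fun f hf => ?_⟩
  have hd := degree_mul_lt (natDegree_X_sub_C_le (-1 : ℝ)) hf
  rw [mulFunctional_apply, mul_left_comm,
    gegFunctional_parityKernel_mul hn (hd.trans_eq (by rw [add_comm 1]))]
  simp only [eval_mul, eval_sub, eval_X, eval_C]
  ring

theorem isReproducingAt_parityKernel_succ_add (hn : 2 ≤ n) (m : ℕ) :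
    IsReproducingAt (gegFunctional hn) (m + 2) 1
      (parityKernel n (m + 1) + parityKernel n m) := by
  have hlt : ((m + 2 : ℕ) : WithBot ℕ) < (m + 1 + 2 : ℕ) := by exact_mod_cast Nat.lt_succ_self _
  have hlt' : ((m + 1 : ℕ) : WithBot ℕ) < (m + 2 : ℕ) := by exact_mod_cast Nat.lt_succ_self _
  refine ⟨(degree_add_le _ _).trans_lt (max_lt (degree_parityKernel_lt (m + 1))
    ((degree_parityKernel_lt m).trans hlt')), fun f hf => ?_⟩
  rw [add_mul, map_add, gegFunctional_parityKernel_mul hn (hf.trans hlt),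
    gegFunctional_parityKernel_mul hn hf]
  ring

theorem strictlyPositive_residualFunctional {m : ℕ} (hn : 2 ≤ n)
    (hN : homDim n (m + 1) + homDim n m < N) :
    StrictlyPositive (residualFunctional hn N) (m + 2) := by
  have hN₀ : 0 < N := (add_pos (homDim_pos n _) (homDim_pos n _)).trans hN
  refine (isReproducingAt_parityKernel_succ_add hn m).strictlyPositive_sub
    (strictlyPositive_gegFunctional hn _) (inv_pos.2 hN₀).le ?_
  rwa [eval_add, eval_one_parityKernel hn, eval_one_parityKernel hn, inv_mul_lt_one₀ hN₀]

theorem exists_residual_gauss_rule {m : ℕ} (hn : 2 ≤ n) (hN : 2 * homDim n m < N) :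
    ∃ (s : Finset ℝ) (ρ : ℝ → ℝ), #s = m + 1 ∧ (∀ x ∈ s, x ∈ Set.Ioo (-1 : ℝ) 1) ∧
      IsPositiveRule (residualFunctional hn N) (2 * (m + 1)) s ρ := by
  have hN₀ : 0 < N := (mul_pos two_pos (homDim_pos n m)).trans hN
  refine exists_gauss_rule (by norm_num) ?_ ?_
  · rw [mulFunctional_residualFunctional]
    refine (isReproducingAt_parityKernel hn m).strictlyPositive_sub
      (strictlyPositive_mulFunctional_gegFunctional hn _ (X_sub_C_ne_zero _) fun t ht => ?_) ?_ ?_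
    · simpa [neg_le_iff_add_nonneg] using ht.1
    · simp only [eval_sub, eval_X, eval_C]
      positivity
    · rw [eval_one_parityKernel hn, mul_assoc, inv_mul_lt_one₀ hN₀]
      simpa [one_add_one_eq_two] using hN
  · refine strictlyPositive_mulFunctional_residualFunctional hn N _ ?_ (by simp) fun t ht => ?_
    · exact sub_ne_zero.2 (X_ne_C 1).symm
    · simpa using ht.2

theorem exists_residual_radau_rule {m : ℕ} (hn : 2 ≤ n) (hN : homDim n (m + 1) + homDim n m < N) :
    ∃ (s : Finset ℝ) (ρ : ℝ → ℝ), #s = m + 1 ∧ (∀ x ∈ s, x ∈ Set.Ioo (-1 : ℝ) 1) ∧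
      IsPositiveRule (residualFunctional hn N) (2 * (m + 1) + 1) (insert (-1) s) ρ := by
  refine exists_radau_rule (by norm_num) (strictlyPositive_residualFunctional hn hN) ?_
  have hcomp : mulFunctional (C 1 - X) (mulFunctional (X - C (-1)) (residualFunctional hn N)) =
      mulFunctional ((X - C (-1)) * (C 1 - X)) (residualFunctional hn N) :=
    LinearMap.ext fun f => by simp only [mulFunctional_apply, mul_assoc]
  rw [hcomp]
  refine strictlyPositive_mulFunctional_residualFunctional hn N _ (mul_ne_zero
    (X_sub_C_ne_zero _) (sub_ne_zero.2 (X_ne_C 1).symm)) (by simp) fun t ht => ?_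
  simp only [eval_mul, eval_sub, eval_X, eval_C]
  exact mul_nonneg (by linarith [ht.1]) (by linarith [ht.2])

theorem prefixNodalsMem_of_residual_gauss_rule {m : ℕ} {hn : 2 ≤ n} (hN : 0 < N) (hs : #s = m + 1)
    (hs₁ : ∀ x ∈ s, x < 1) (h : IsPositiveRule (residualFunctional hn N) (2 * (m + 1)) s ρ) :
    PrefixNodalsMem s (posDefCone n) := by
  have hmem : (1 : ℝ) ∉ s := fun h => (hs₁ 1 h).false
  have hrule := h.insert_one hN hmem
  have horth := (isOrthogonalSystem_gegenbauer hn #(insert 1 s)).discreteFunctional hrule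
    (by rw [card_insert_of_notMem hmem]; omega)
  have hprefix : ∀ y ∈ insert 1 s, prefixNodal (insert 1 s) y ∈ posDefCone n := fun y hy =>
    Submodule.span_mono (Set.image_subset_range _ _)
      (prefixNodal_mem_hull hrule.weight_pos horth hy)
  refine ⟨fun y hy => ?_, ?_⟩
  · rw [← prefixNodal_insert_of_lt (hs₁ y hy)]
    exact hprefix y (mem_insert_of_mem hy)
  · rw [← prefixNodal_insert_self hs₁]
    exact hprefix 1 (mem_insert_self 1 s)

theorem isOrthogonalSystem_parityKernel (hn : 2 ≤ n) (m : ℕ) :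
    IsOrthogonalSystem (mulFunctional (1 - X ^ 2) (gegFunctional hn)) m (parityKernel n) := by
  refine ⟨fun i _ => natDegree_parityKernel_le i, fun i _ => coeff_parityKernel_pos hn i,
    fun j _ i hij => ?_⟩
  have hd : ((1 - X ^ 2) * parityKernel n i : ℝ[X]).degree < (j + 2 : ℕ) := by
    refine (degree_mul_lt (a := 2) (by compute_degree) (degree_parityKernel_lt i)).trans_le ?_
    exact_mod_cast (by omega)
  rw [mulFunctional_apply, ← mul_assoc, mul_comm, gegFunctional_parityKernel_mul hn hd]
  simp

theorem prefixNodal_mem_posDefCone_of_residual_radau_rule {m : ℕ} {hn : 2 ≤ n} (hN : 0 < N)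
    (hs : #s = m + 1) (hs₁ : ∀ x ∈ s, x ∈ Set.Ioo (-1 : ℝ) 1)
    (h : IsPositiveRule (residualFunctional hn N) (2 * (m + 1) + 1) (insert (-1) s) ρ)
    {y : ℝ} (hy : y ∈ s) : prefixNodal s y ∈ posDefCone n := by
  have hmem : (1 : ℝ) ∉ insert (-1) s := by
    rw [mem_insert, not_or]
    exact ⟨by norm_num, fun h => lt_irrefl 1 (hs₁ 1 h).2⟩
  have hrule := (h.insert_one hN hmem).mulFunctional (w := 1 - X ^ 2) (t := s)
    (e := 2 * m + 1)
    ((subset_insert _ _).trans (subset_insert _ _)) (fun x hx => ?_) (fun x hx hxs => ?_) ?_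
  · refine Submodule.span_le.2 ?_ (prefixNodal_mem_hull hrule.weight_pos
      ((isOrthogonalSystem_parityKernel hn _).discreteFunctional hrule (by omega)) hy)
    rintro _ ⟨i, _, rfl⟩
    exact parityKernel_mem_posDefCone hn i
  · simpa [abs_lt] using hs₁ x hx
  · obtain rfl | rfl | hx := by simpa only [mem_insert] using hx
    · simp
    · simp
    · exact absurd hx hxs
  · have : (1 - X ^ 2 : ℝ[X]).natDegree ≤ 2 := by compute_degree
    omega

theorem IsPositiveRule.gegFunctional_nodal_mul {hn : 2 ≤ n} {a : ℝ} (ha : a ∉ s)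
    (h : IsPositiveRule (residualFunctional hn N) d (insert a s) ρ) {f : ℝ[X]}
    (hf : #s + f.natDegree < d) :
    gegFunctional hn (Lagrange.nodal s id * f) =
      N⁻¹ * ((Lagrange.nodal s id).eval 1 * f.eval 1) +
        ρ a * ((Lagrange.nodal s id).eval a * f.eval a) := by
  have hd : (Lagrange.nodal s id * f).degree < d := by
    refine (natDegree_le_iff_degree_lt_succ.1 natDegree_mul_le).trans_le ?_
    rw [Lagrange.natDegree_nodal]
    exact_mod_cast hf
  rw [h.gegFunctional_eq hd, sum_insert ha, sum_mul_eval_nodal_mul, add_zero, eval_mul, eval_mul]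

theorem IsPositiveRule.weight_neg_one_le {m : ℕ} {hn : 2 ≤ n} (hs : -1 ∉ s) (hN : 0 < N)
    (h : IsPositiveRule (residualFunctional hn N) (2 * m + 1) (insert (-1) s) ρ)
    (hN₂ : N ≤ 2 * homDim n m) : ρ (-1) ≤ N⁻¹ := by
  have hD := homDim_pos n m
  have hd : (parityKernel n m * parityKernel n m).degree < (2 * m + 1 : ℕ) :=
    (degree_mul_lt (natDegree_parityKernel_le m) (degree_parityKernel_lt m)).trans_eq
      (by rw [two_mul, add_assoc])
  have hexact := h.gegFunctional_eq hd
  have hsum : 0 ≤ ∑ x ∈ s, ρ x * (parityKernel n m * parityKernel n m).eval x :=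
    sum_nonneg fun x hx => mul_nonneg (h.weight_pos x (mem_insert_of_mem hx)).le
      (by rw [eval_mul]; exact mul_self_nonneg _)
  rw [gegFunctional_parityKernel_sq hn, sum_insert hs, eval_mul, eval_mul,
    eval_one_parityKernel hn, eval_neg_one_parityKernel hn, mul_mul_mul_comm, ← mul_pow,
    neg_one_mul, neg_neg, one_pow, one_mul] at hexact
  have hle : N⁻¹ * homDim n m + ρ (-1) * homDim n m ≤ 1 :=
    le_of_mul_le_mul_right (by linarith) hD
  have htwo : 1 ≤ 2 * (N⁻¹ * homDim n m) := by
    rw [mul_left_comm, inv_mul_eq_div, one_le_div hN]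
    exact hN₂
  exact le_of_mul_le_mul_right (by linarith) hD

theorem IsPositiveRule.weight_neg_one_mul_le {m : ℕ} {hn : 2 ≤ n} (hs : #s = m + 1)
    (hs₁ : ∀ x ∈ s, x ∈ Set.Ioo (-1 : ℝ) 1)
    (h : IsPositiveRule (residualFunctional hn N) (2 * (m + 1) + 1) (insert (-1) s) ρ)
    (hN : homDim n (m + 1) + homDim n m < N) (hN₂ : N ≤ 2 * homDim n (m + 1)) :
    ρ (-1) * ((-1) ^ (m + 1) * (Lagrange.nodal s id).eval (-1)) ≤
      N⁻¹ * (Lagrange.nodal s id).eval 1 := by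
  have hmem : (-1 : ℝ) ∉ s := fun h => lt_irrefl (-1) (hs₁ _ h).1
  have hN₀ : 0 < N := (add_pos (homDim_pos n _) (homDim_pos n _)).trans hN
  have hweight := h.weight_neg_one_le hmem hN₀ hN₂
  have hv := neg_one_pow_card_mul_eval_nodal_pos fun x hx => (hs₁ x hx).1
  have hdeg : (Lagrange.nodal s (id : ℝ → ℝ)).degree < (m + 2 : ℕ) := by
    rw [Lagrange.degree_nodal, hs]
    exact_mod_cast Nat.lt_succ_self _
  have hexact := h.gegFunctional_nodal_mul hmem (f := parityKernel n m)
    (by have := natDegree_parityKernel_le (n := n) m; omega)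
  rw [mul_comm _ (parityKernel n m), gegFunctional_parityKernel_mul hn hdeg,
    eval_one_parityKernel hn, eval_neg_one_parityKernel hn] at hexact
  rw [hs] at hv
  set u := (Lagrange.nodal s id).eval 1
  set v := (-1) ^ (m + 1) * (Lagrange.nodal s id).eval (-1) with hv_def
  have hdiff : v - u = 2 * homDim n m * (ρ (-1) * v - N⁻¹ * u) := by
    rw [hv_def, pow_succ]
    linear_combination -2 * hexact
  by_contra! hlt
  have huv : 0 < v - u := by
    rw [hdiff]
    exact mul_pos (mul_pos two_pos (homDim_pos n m)) (sub_pos.2 hlt)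
  have hgap : ρ (-1) * v - N⁻¹ * u ≤ N⁻¹ * (v - u) := by
    rw [mul_sub]
    exact sub_le_sub_right (mul_le_mul_of_nonneg_right hweight hv.le) _
  have hsmall : 2 * homDim n m * N⁻¹ < 1 := by
    rw [← div_eq_mul_inv, div_lt_one hN₀]
    linarith [homDim_monotone n m.le_succ]
  nlinarith [mul_le_mul_of_nonneg_left hgap (mul_pos two_pos (homDim_pos n m)).le]

theorem nodal_mem_posDefCone_of_residual_radau_rule {m : ℕ} {hn : 2 ≤ n} (hs : #s = m + 1)
    (hs₁ : ∀ x ∈ s, x ∈ Set.Ioo (-1 : ℝ) 1)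
    (h : IsPositiveRule (residualFunctional hn N) (2 * (m + 1) + 1) (insert (-1) s) ρ)
    (hN : homDim n (m + 1) + homDim n m < N) (hN₂ : N ≤ 2 * homDim n (m + 1)) :
    Lagrange.nodal s id ∈ posDefCone n := by
  have hmem : (-1 : ℝ) ∉ s := fun h => lt_irrefl (-1) (hs₁ _ h).1
  have hle := h.weight_neg_one_mul_le hs hs₁ hN hN₂
  have hpos := mul_pos (h.weight_pos _ (mem_insert_self _ _))
    (hs ▸ neg_one_pow_card_mul_eval_nodal_pos fun x hx => (hs₁ x hx).1)
  have hdeg : (Lagrange.nodal s (id : ℝ → ℝ)).degree < (m + 2 : ℕ) := by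
    rw [Lagrange.degree_nodal, hs]
    exact_mod_cast Nat.lt_succ_self _
  refine mem_posDefCone hn hdeg fun l hl => ?_
  rcases (Nat.lt_succ_iff.1 hl).eq_or_lt with rfl | hlm
  · have hmonic : (Lagrange.nodal s (id : ℝ → ℝ)).coeff (m + 1) = 1 := by
      rw [← hs, ← Lagrange.natDegree_nodal (s := s) (v := (id : ℝ → ℝ))]
      exact Lagrange.nodal_monic
    have hsys := isOrthogonalSystem_gegenbauer hn (m + 2)
    rw [hsys.apply_mul_eq_coeff_div_mul hl hdeg, hmonic]
    exact mul_nonneg (div_nonneg zero_le_one (hsys.coeff_pos _ hl).le)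
      (hsys.apply_mul_self_pos (strictlyPositive_gegFunctional hn _) hl).le
  · rw [h.gegFunctional_nodal_mul hmem
      (by have := natDegree_gegenbauer_le (n := n) l; omega), eval_one_gegenbauer hn,
      eval_neg_one_gegenbauer hn]
    have hsign : (-1 : ℝ) ^ (m + 1) * (-1) ^ (m + 1) = 1 := by rw [← mul_pow]; norm_num
    have hsplit : (Lagrange.nodal s id).eval (-1) * (-1) ^ l =
        (-1) ^ (m + 1) * (Lagrange.nodal s id).eval (-1) * (-1) ^ (m + 1 + l) := by
      rw [pow_add]
      linear_combination (-(Lagrange.nodal s id).eval (-1) * (-1) ^ l) * hsign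
    rw [hsplit]
    rcases neg_one_pow_eq_or ℝ (m + 1 + l) with h | h <;> rw [h] <;> linarith

theorem prefixNodalsMem_of_residual_radau_rule {m : ℕ} {hn : 2 ≤ n} (hs : #s = m + 1)
    (hs₁ : ∀ x ∈ s, x ∈ Set.Ioo (-1 : ℝ) 1)
    (h : IsPositiveRule (residualFunctional hn N) (2 * (m + 1) + 1) (insert (-1) s) ρ)
    (hN : homDim n (m + 1) + homDim n m < N) (hN₂ : N ≤ 2 * homDim n (m + 1)) :
    PrefixNodalsMem s (posDefCone n) :=
  ⟨fun _ => prefixNodal_mem_posDefCone_of_residual_radau_rule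
    ((add_pos (homDim_pos n _) (homDim_pos n _)).trans hN) hs hs₁ h,
    nodal_mem_posDefCone_of_residual_radau_rule hs hs₁ h hN hN₂⟩

end Nodes

section Hermite

variable {K : PointedCone ℝ ℝ[X]} {s : Finset ℝ} {T a b : ℝ} {h : ℝ → ℝ}

theorem PrefixNodalsMem.of_insert (hT : ∀ x ∈ s, x < T) (h : PrefixNodalsMem (insert T s) K) :
    PrefixNodalsMem s K := by
  refine ⟨fun y hy => ?_, ?_⟩
  · rw [← prefixNodal_insert_of_lt (hT y hy)]
    exact h.prefix_mem y (mem_insert_of_mem hy)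
  · rw [← prefixNodal_insert_self hT]
    exact h.prefix_mem T (mem_insert_self T s)

-- Nodes are added in increasing order. With `w` the nodal polynomial of the nodes so far, the
-- remainder `w² g` is divided twice at the next node `T`, which adds `g(T) w² + g₁(T) w² (X - T)`.
theorem exists_hermite_interpolant (hK : ∀ p ∈ K, ∀ q ∈ K, p * q ∈ K)
    (hs : ∀ x ∈ s, x ∈ Set.Ico a b) (hsK : PrefixNodalsMem s K)
    (hh : HasNonnegPowerSeriesOn h a b) :
    ∃ f ∈ K, f.degree < (2 * #s : ℕ) ∧ ∃ g, HasNonnegPowerSeriesOn g a b ∧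
      ∀ t ∈ Set.Ico a b, h t = f.eval t + (Lagrange.nodal s id).eval t ^ 2 * g t := by
  induction s using Finset.induction_on_max with
  | empty => exact ⟨0, zero_mem K, by simp, h, hh, fun t _ => by simp⟩
  | insert T s hT ih =>
    have hTs : T ∉ s := fun h => (hT T h).false
    obtain ⟨f, hfK, hfd, g, hg, hfg⟩ :=
      ih (fun x hx => hs x (mem_insert_of_mem hx)) (hsK.of_insert hT)
    have hTab := hs T (mem_insert_self T s)
    obtain ⟨g₁, hg₁, hgg₁⟩ := hg.exists_eq_add_sub_mul hTab
    obtain ⟨g₂, hg₂, hg₁g₂⟩ := hg₁.exists_eq_add_sub_mul hTab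
    have hw := (hsK.of_insert hT).nodal_mem
    have hwT := hsK.nodal_mem
    have hwd : (Lagrange.nodal s (id : ℝ → ℝ)).natDegree ≤ #s := Lagrange.natDegree_nodal.le
    have hwTd : ((X - C T) * Lagrange.nodal s id).natDegree ≤ 1 + #s :=
      natDegree_mul_le_of_le (natDegree_X_sub_C_le T) hwd
    rw [Lagrange.nodal_insert_eq_nodal hTs, id_eq] at hwT
    rw [Lagrange.nodal_insert_eq_nodal hTs, card_insert_of_notMem hTs, id_eq]
    set w := Lagrange.nodal s (id : ℝ → ℝ)
    refine ⟨f + (g T • (w * w) + g₁ T • (w * ((X - C T) * w))),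
      add_mem hfK (add_mem (K.smul_mem (hg.nonneg hTab) (hK _ hw _ hw))
        (K.smul_mem (hg₁.nonneg hTab) (hK _ hw _ hwT))), ?_, g₂, hg₂, fun t ht => ?_⟩
    · refine (degree_add_le _ _).trans_lt (max_lt (hfd.trans_le (by exact_mod_cast (by omega)))
        (natDegree_le_iff_degree_lt_succ (n := 2 * #s + 1) |>.1
          (natDegree_add_le_of_degree_le ?_ ?_)))
      · exact (natDegree_smul_le _ _).trans ((natDegree_mul_le_of_le hwd hwd).trans (by omega))
      · exact (natDegree_smul_le _ _).trans ((natDegree_mul_le_of_le hwd hwTd).trans (by omega))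
    · rw [hfg t ht, hgg₁ t ht, hg₁g₂ t ht]
      simp only [eval_add, eval_smul, eval_mul, eval_sub, eval_X, eval_C, smul_eq_mul]
      ring

/-- Every function with nonnegative Taylor coefficients at `a` is bounded below on `[a, b)` by a
polynomial in `K` of degree less than `d` that agrees with it on `s`. -/
def HasLowerInterpolants (K : PointedCone ℝ ℝ[X]) (d : ℕ) (s : Finset ℝ) (a b : ℝ) : Prop :=
  ∀ h, HasNonnegPowerSeriesOn h a b → ∃ f ∈ K, f.degree < d ∧
    (∀ t ∈ Set.Ico a b, f.eval t ≤ h t) ∧ ∀ x ∈ s, f.eval x = h x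

theorem PrefixNodalsMem.hasLowerInterpolants (hsK : PrefixNodalsMem s K)
    (hK : ∀ p ∈ K, ∀ q ∈ K, p * q ∈ K) (hs : ∀ x ∈ s, x ∈ Set.Ico a b) :
    HasLowerInterpolants K (2 * #s) s a b := by
  intro h hh
  obtain ⟨f, hfK, hfd, g, hg, hfg⟩ := exists_hermite_interpolant hK hs hsK hh
  refine ⟨f, hfK, hfd, fun t ht => ?_, fun x hx => ?_⟩
  · rw [hfg t ht]
    exact le_add_of_nonneg_right (mul_nonneg (sq_nonneg _) (hg.nonneg ht))
  · rw [hfg x (hs x hx), ← id_eq x, Lagrange.eval_nodal_at_node hx]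
    simp

theorem PrefixNodalsMem.hasLowerInterpolants_insert (hsK : PrefixNodalsMem s K)
    (hK : ∀ p ∈ K, ∀ q ∈ K, p * q ∈ K) (hs : ∀ x ∈ s, x ∈ Set.Ico a b) (hab : a < b) :
    HasLowerInterpolants K (2 * #s + 1) (insert a s) a b := by
  intro h hh
  obtain ⟨f, hfK, hfd, g, hg, hfg⟩ := exists_hermite_interpolant hK hs hsK hh
  have ha : a ∈ Set.Ico a b := ⟨le_rfl, hab⟩
  obtain ⟨g₁, hg₁, hgg₁⟩ := hg.exists_eq_add_sub_mul ha
  set w := Lagrange.nodal s (id : ℝ → ℝ)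
  have hwd : w.natDegree ≤ #s := Lagrange.natDegree_nodal.le
  have hrem : ∀ t ∈ Set.Ico a b,
      h t = (f + g a • (w * w)).eval t + w.eval t ^ 2 * ((t - a) * g₁ t) := fun t ht => by
    rw [hfg t ht, hgg₁ t ht]
    simp only [eval_add, eval_smul, eval_mul, smul_eq_mul]
    ring
  refine ⟨f + g a • (w * w), add_mem hfK
    (K.smul_mem (hg.nonneg ha) (hK _ hsK.nodal_mem _ hsK.nodal_mem)), ?_, fun t ht => ?_,
    (forall_mem_insert _ _ _).2 ⟨?_, fun x hx => ?_⟩⟩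
  · refine (degree_add_le _ _).trans_lt (max_lt (hfd.trans_le (by exact_mod_cast (by omega)))
      (natDegree_le_iff_degree_lt_succ.1 ?_))
    exact (natDegree_smul_le _ _).trans ((natDegree_mul_le_of_le hwd hwd).trans (by omega))
  · rw [hrem t ht]
    exact le_add_of_nonneg_right
      (mul_nonneg (sq_nonneg _) (mul_nonneg (sub_nonneg.2 ht.1) (hg₁.nonneg ht)))
  · rw [hrem a ha, sub_self, zero_mul, mul_zero, add_zero]
  · have hwx : w.eval x = 0 := Lagrange.eval_nodal_at_node (v := (id : ℝ → ℝ)) hx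
    rw [hrem x (hs x hx), hwx, zero_pow two_ne_zero, zero_mul, add_zero]

end Hermite

section UniversalLowerBound

variable {n : ℕ} {N : ℝ} {d : ℕ} {s : Finset ℝ} {ρ : ℝ → ℝ}

theorem DGS_odd (hn : 2 ≤ n) (m : ℕ) : (DGS n (2 * m + 1) : ℝ) = 2 * homDim n m := by
  rw [DGS, if_pos (by omega), homDim, show n + (2 * m + 1 + 1) / 2 - 2 = n + m - 1 by omega]
  push_cast
  rfl

theorem DGS_even (hn : 2 ≤ n) (m : ℕ) :
    (DGS n (2 * m + 2) : ℝ) = homDim n (m + 1) + homDim n m := by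
  rw [DGS, if_neg (by omega), homDim, homDim,
    show n + (2 * m + 2) / 2 - 1 = n + (m + 1) - 1 by omega,
    show n + (2 * m + 2) / 2 - 2 = n + m - 1 by omega]
  push_cast
  rfl

theorem AbsMonOn.hasNonnegPowerSeriesOn {h : ℝ → ℝ} (hh : AbsMonOn h) :
    HasNonnegPowerSeriesOn h (-1) 1 :=
  hasNonnegPowerSeriesOn_of_absolutelyMonotoneOn (by norm_num)
    ((AbsolutelyMonotoneOn.iff_iteratedDerivWithin_nonneg (uniqueDiffOn_Ico _ _)).2 hh)

theorem IsPositiveRule.isQuadratureRule {hn : 2 ≤ n} {k : ℕ} (hk : #s = k)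
    (hs : ∀ x ∈ s, x ∈ Set.Ico (-1 : ℝ) 1)
    (h : IsPositiveRule (residualFunctional hn N) (d + 1 : ℕ) s ρ) :
    IsQuadratureRule n N (s.orderEmbOfFin hk) (fun i => ρ (s.orderEmbOfFin hk i))
      (polySpace d) := by
  have hmem := s.orderEmbOfFin_mem hk
  refine ⟨fun i => (hs _ (hmem i)).1, fun i => (hs _ (hmem i)).2,
    (s.orderEmbOfFin hk).strictMono, fun i => h.weight_pos _ (hmem i), ?_⟩
  rintro _ ⟨f, hf, rfl⟩
  rw [← gegFunctional_apply hn, h.gegFunctional_eq (natDegree_le_iff_degree_lt_succ.1 hf),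
    inv_mul_eq_div, ← sum_coe_sort s, ← (s.orderIsoOfFin hk).toEquiv.sum_comp]
  rfl

theorem exists_quadrature_nodes_odd (hn : 2 ≤ n) (m : ℕ) (hN : (DGS n (2 * m + 1) : ℝ) < N) :
    ∃ (s : Finset ℝ) (ρ : ℝ → ℝ), #s = m + 1 ∧ (∀ x ∈ s, x ∈ Set.Ico (-1 : ℝ) 1) ∧
      IsPositiveRule (residualFunctional hn N) (2 * m + 1 + 1) s ρ ∧
      HasLowerInterpolants (posDefCone n) (2 * m + 1 + 1) s (-1) 1 := by
  rw [DGS_odd hn] at hN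
  have hN₀ : 0 < N := (mul_pos two_pos (homDim_pos n m)).trans hN
  obtain ⟨s, ρ, hs, hsI, hrule⟩ := exists_residual_gauss_rule hn hN
  have hsI' : ∀ x ∈ s, x ∈ Set.Ico (-1 : ℝ) 1 := fun x hx => Set.Ioo_subset_Ico_self (hsI x hx)
  have hmem := prefixNodalsMem_of_residual_gauss_rule hN₀ hs (fun x hx => (hsI x hx).2) hrule
  have hlower := hmem.hasLowerInterpolants (fun _ hp _ => mul_mem_posDefCone hn hp) hsI'
  rw [hs] at hlower
  exact ⟨s, ρ, hs, hsI', hrule, hlower⟩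

theorem exists_quadrature_nodes_even (hn : 2 ≤ n) (m : ℕ) (hN : (DGS n (2 * m + 2) : ℝ) < N)
    (hN₂ : N ≤ DGS n (2 * m + 3)) :
    ∃ (s : Finset ℝ) (ρ : ℝ → ℝ), #s = m + 2 ∧ (∀ x ∈ s, x ∈ Set.Ico (-1 : ℝ) 1) ∧
      IsPositiveRule (residualFunctional hn N) (2 * m + 2 + 1) s ρ ∧
      HasLowerInterpolants (posDefCone n) (2 * m + 2 + 1) s (-1) 1 := by
  rw [DGS_even hn] at hN
  rw [show 2 * m + 3 = 2 * (m + 1) + 1 by ring, DGS_odd hn] at hN₂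
  obtain ⟨s, ρ, hs, hsI, hrule⟩ := exists_residual_radau_rule hn hN
  have hsI' : ∀ x ∈ s, x ∈ Set.Ico (-1 : ℝ) 1 := fun x hx => Set.Ioo_subset_Ico_self (hsI x hx)
  have hmem := prefixNodalsMem_of_residual_radau_rule hs hsI hrule hN hN₂
  have hlower := hmem.hasLowerInterpolants_insert (fun _ hp _ => mul_mem_posDefCone hn hp) hsI'
    (by norm_num)
  rw [hs] at hlower
  exact ⟨insert (-1) s, ρ, by
    rw [card_insert_of_notMem fun h => lt_irrefl (-1) (hsI _ h).1, hs],
    (forall_mem_insert _ _ _).2 ⟨by norm_num, hsI'⟩, hrule, hlower⟩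

end UniversalLowerBound

/-- `𝒫_τ` is a ULB-space for `D(n,τ) < N ≤ D(n,τ+1)`. -/
theorem stmt_6 (n : ℕ) (hn : 2 ≤ n)
    (P : ℕ → Polynomial ℝ) (hP : IsGegenbauer n P)
    (k ε : ℕ) (hk : 1 ≤ k) (hε : ε ≤ 1)
    (N : ℝ) (hN1 : (DGS n (2 * k - 1 + ε) : ℝ) < N)
    (hN2 : N ≤ (DGS n (2 * k + ε) : ℝ)) :
    ∃ α ρ : Fin (k + ε) → ℝ,
      IsQuadratureRule n N α ρ (polySpace (2 * k - 1 + ε)) ∧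
      ∀ h : ℝ → ℝ, AbsMonOn h →
        ∃ f : Polynomial ℝ, f.natDegree ≤ 2 * k - 1 + ε ∧
          (∀ i : ℕ, 1 ≤ i → 0 ≤ gegInt n (fun t => f.eval t * (P i).eval t)) ∧
          (∀ t ∈ Set.Ico (-1 : ℝ) 1, f.eval t ≤ h t) ∧
          ∀ i, f.eval (α i) = h (α i) := by
  obtain ⟨s, ρ, hs, hsI, hrule, hlower⟩ : ∃ (s : Finset ℝ) (ρ : ℝ → ℝ), #s = k + ε ∧
      (∀ x ∈ s, x ∈ Set.Ico (-1 : ℝ) 1) ∧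
      IsPositiveRule (residualFunctional hn N) (2 * k - 1 + ε + 1) s ρ ∧
      HasLowerInterpolants (posDefCone n) (2 * k - 1 + ε + 1) s (-1) 1 := by
    obtain ⟨m, rfl⟩ := Nat.exists_eq_add_of_le' hk
    obtain rfl | rfl := Nat.le_one_iff_eq_zero_or_eq_one.1 hε
    · exact exists_quadrature_nodes_odd hn m hN1
    · exact exists_quadrature_nodes_even hn m hN1 hN2
  refine ⟨_, _, hrule.isQuadratureRule hs hsI, fun h hh => ?_⟩
  obtain ⟨f, hfK, hfd, hle, heq⟩ := hlower h hh.hasNonnegPowerSeriesOn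
  refine ⟨f, natDegree_le_iff_degree_lt_succ.2 hfd, fun i _ => ?_, hle,
    fun i => heq _ (s.orderEmbOfFin_mem hs i)⟩
  have hpos := gegFunctional_mul_gegenbauer_nonneg hn hfK i
  rw [← hP.eq_gegenbauer hn, gegFunctional_apply] at hpos
  simpa only [eval_mul] using hpos
end

section
/- Let n ≥ 2, k ≥ 2, and let -1 < β_1 < ⋯ < β_{k+1} < 1 with q_{k+1}(t) = ∏_{i=1}^{k+1}(t-β_i). Assume the determinant condition (∫ t·q_{k+1}(t)²·P_{2k}^{(n)}(t) dμ_n)·(∫ q_{k+1}(t)²·P_{2k+1}^{(n)}(t) dμ_n) ≠ (∫ t·q_{k+1}(t)²·P_{2k+1}^{(n)}(t) dμ_n)·(∫ q_{k+1}(t)²·P_{2k}^{(n)}(t) dμ_n). Then for every function h absolutely monotone on [-1,1) there exists a unique polynomial f ∈ Λ_{n,k} such that f(β_i) = h(β_i) and f'(β_i) = h'(β_i) for i = 1,…,k+1. -/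
open MeasureTheory Finset
open scoped Classical

/-- Membership of a polynomial in `Λ_{n,k} = 𝒫_{2k-1} ⊕ span{P_{2k+2}, P_{2k+3}}`:
degree at most `2k+3` and orthogonality to `P_{2k}` and `P_{2k+1}` in `L²(μ_n)`. -/
def InLambda (n k : ℕ) (P : ℕ → Polynomial ℝ) (p : Polynomial ℝ) : Prop :=
  p.natDegree ≤ 2 * k + 3 ∧
    gegInt n (fun t => p.eval t * (P (2 * k)).eval t) = 0 ∧
    gegInt n (fun t => p.eval t * (P (2 * k + 1)).eval t) = 0

/-- The space `Λ_{n,k}`, as a set of functions on `ℝ`. -/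
def LambdaSpace (n k : ℕ) (P : ℕ → Polynomial ℝ) : Set (ℝ → ℝ) :=
  {f | ∃ p : Polynomial ℝ, InLambda n k P p ∧ f = fun t => p.eval t}

/-!
Interpolating values and derivatives at `m` nodes, together with prescribing `r` linear functionals
`φ i`, is a square linear system on the polynomials of degree less than `2 * m + r`, so it suffices
to show that the homogeneous system has only the zero solution. If all values and derivatives
vanish, the polynomial is `p * q ^ 2` with `q` the nodal polynomial and `deg p < r`; the functionals
`φ i` then vanish at it exactly when the coefficient vector of `p` is in the kernel of the matrix
`φ i (X ^ j * q ^ 2)`. For `Λ_{n,k}` one takes `r = 2` and the inner products with `P_{2k}` and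
`P_{2k+1}`.
-/

section Interpolation

open Polynomial Lagrange Matrix

/-- The matrix of moments `φ i (X ^ j * q)`: in the monomial basis for the cofactor `p`, it
represents the functionals `φ i` on the products `p * q` with `deg p < r`. -/
noncomputable def momentMatrix {R : Type*} [CommSemiring R] {r : ℕ} (φ : Fin r → R[X] →ₗ[R] R)
    (q : R[X]) : Matrix (Fin r) (Fin r) R :=
  Matrix.of fun i j => φ i (X ^ (j : ℕ) * q)

theorem momentMatrix_mulVec_coeff {R : Type*} [CommSemiring R] {r : ℕ}
    (φ : Fin r → R[X] →ₗ[R] R) (q : R[X]) {p : R[X]} (hp : p ∈ degreeLT R r) :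
    (momentMatrix φ q *ᵥ fun j => p.coeff j) = fun i => φ i (p * q) := by
  have hpq : p * q = ∑ j : Fin r, p.coeff j • (X ^ (j : ℕ) * q) := by
    conv_lhs => rw [← sum_C_mul_X_pow_eq p, ← sum_fin _ (by simp) (mem_degreeLT.1 hp)]
    simp only [sum_mul, smul_eq_C_mul, mul_assoc]
  funext i
  simp only [hpq, map_sum, map_smul, momentMatrix, mulVec, dotProduct, of_apply, smul_eq_mul,
    mul_comm]

theorem eq_zero_of_dvd_of_det_momentMatrix_ne_zero {R : Type*} [CommRing R] [IsDomain R] {r : ℕ}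
    {φ : Fin r → R[X] →ₗ[R] R} {q f : R[X]} (hdet : (momentMatrix φ q).det ≠ 0)
    (hq : q ≠ 0) (hf : f ∈ degreeLT R (q.natDegree + r)) (hqf : q ∣ f) (hφ : ∀ i, φ i f = 0) :
    f = 0 := by
  obtain ⟨p, rfl⟩ := hqf
  have hp : p ∈ degreeLT R r := by
    obtain rfl | hp0 := eq_or_ne p 0
    · exact zero_mem _
    rw [mem_degreeLT, ← natDegree_lt_iff_degree_lt (mul_ne_zero hq hp0), natDegree_mul hq hp0,
      Nat.add_lt_add_iff_left] at hf
    exact mem_degreeLT.2 ((natDegree_lt_iff_degree_lt hp0).1 hf)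
  have hcoeff : (fun j : Fin r => p.coeff j) = 0 := by
    refine eq_zero_of_mulVec_eq_zero hdet ?_
    rw [momentMatrix_mulVec_coeff φ q hp]
    exact funext fun i => by rw [mul_comm, hφ i, Pi.zero_apply]
  rw [(degreeLTEquiv_eq_zero_iff_eq_zero hp).1 hcoeff, mul_zero]

/-- The data of the mixed interpolation problem: the functionals `φ i` of a polynomial, and its
values and derivatives at the nodes `v i`. -/
noncomputable def hermiteData {R ι : Type*} [CommSemiring R] {r : ℕ} (v : ι → R)
    (φ : Fin r → R[X] →ₗ[R] R) : R[X] →ₗ[R] (Fin r → R) × (ι → R) × (ι → R) :=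
  (LinearMap.pi φ).prod
    ((LinearMap.pi fun i => leval (v i)).prod (LinearMap.pi fun i => leval (v i) ∘ₗ derivative))

theorem hermiteData_eq_iff {R ι : Type*} [CommSemiring R] {r : ℕ} {v : ι → R}
    {φ : Fin r → R[X] →ₗ[R] R} {f : R[X]} {c : Fin r → R} {y y' : ι → R} :
    hermiteData v φ f = (c, y, y') ↔
      (∀ i, φ i f = c i) ∧ (∀ i, f.eval (v i) = y i) ∧ ∀ i, f.derivative.eval (v i) = y' i := by
  simp only [hermiteData, LinearMap.prod_apply, Function.prod_apply, Prod.mk.injEq, funext_iff,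
    LinearMap.pi_apply, LinearMap.comp_apply, leval_apply]

variable {K ι : Type*} [Field K]

theorem nodal_sq_dvd_of_eval_eq_zero {s : Finset ι} {v : ι → K} (hv : Set.InjOn v s) {f : K[X]}
    (hf : ∀ i ∈ s, f.eval (v i) = 0) (hf' : ∀ i ∈ s, f.derivative.eval (v i) = 0) :
    nodal s v ^ 2 ∣ f := by
  obtain rfl | hf0 := eq_or_ne f 0
  · exact dvd_zero _
  rw [nodal_eq, ← Finset.prod_pow]
  refine Finset.prod_dvd_of_coprime (fun i hi j hj hij => ?_) fun i hi => ?_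
  · have hunit : IsUnit (v i - v j) := (sub_ne_zero.2 (hv.ne hi hj hij)).isUnit
    exact (isCoprime_X_sub_C_of_isUnit_sub hunit).pow
  · rw [← le_rootMultiplicity_iff hf0]
    exact (one_lt_rootMultiplicity_iff_isRoot hf0).2 ⟨hf i hi, hf' i hi⟩

variable [Fintype ι] {r : ℕ} {v : ι → K} {φ : Fin r → K[X] →ₗ[K] K}

theorem hermiteData_domRestrict_bijective (hv : Function.Injective v)
    (hdet : (momentMatrix φ (nodal univ v ^ 2)).det ≠ 0) :
    Function.Bijective
      ((hermiteData v φ).domRestrict (degreeLT K (2 * Fintype.card ι + r))) := by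
  have hdeg : (nodal univ v ^ 2).natDegree = 2 * Fintype.card ι := by
    rw [natDegree_pow, natDegree_nodal, card_univ]
  have hinj : Function.Injective
      ((hermiteData v φ).domRestrict (degreeLT K (2 * Fintype.card ι + r))) := by
    refine (injective_iff_map_eq_zero _).2 fun ⟨f, hf⟩ hf0 => Subtype.ext ?_
    obtain ⟨hφ, hval, hder⟩ := hermiteData_eq_iff.1 hf0
    have hdvd : nodal univ v ^ 2 ∣ f :=
      nodal_sq_dvd_of_eval_eq_zero hv.injOn (fun i _ => hval i) fun i _ => hder i
    exact eq_zero_of_dvd_of_det_momentMatrix_ne_zero hdet (pow_ne_zero 2 nodal_ne_zero)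
      (hdeg.symm ▸ hf) hdvd hφ
  have : FiniteDimensional K (degreeLT K (2 * Fintype.card ι + r)) :=
    (degreeLTEquiv K _).symm.finiteDimensional
  have hrank : Module.finrank K (degreeLT K (2 * Fintype.card ι + r)) =
      Module.finrank K ((Fin r → K) × (ι → K) × (ι → K)) := by
    rw [(degreeLTEquiv K _).finrank_eq]
    simp only [Module.finrank_prod, Module.finrank_fintype_fun_eq_card, Fintype.card_fin]
    ring
  exact ⟨hinj, (LinearMap.injective_iff_surjective_of_finrank_eq_finrank hrank).1 hinj⟩

theorem stmt_10_general (hv : Function.Injective v)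
    (hdet : (momentMatrix φ (nodal univ v ^ 2)).det ≠ 0) (c : Fin r → K) (y y' : ι → K) :
    ∃! f : K[X], f ∈ degreeLT K (2 * Fintype.card ι + r) ∧ (∀ i, φ i f = c i) ∧
      (∀ i, f.eval (v i) = y i) ∧ ∀ i, f.derivative.eval (v i) = y' i := by
  simp only [← hermiteData_eq_iff]
  obtain ⟨⟨f, hf⟩, hdata, hunique⟩ :=
    (hermiteData_domRestrict_bijective hv hdet).existsUnique (c, y, y')
  exact ⟨f, ⟨hf, hdata⟩, fun g ⟨hg, hgdata⟩ => congrArg Subtype.val (hunique ⟨g, hg⟩ hgdata)⟩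

end Interpolation

section Gegenbauer

open Polynomial Lagrange

theorem gegInt_eq_zero_of_not_integrableOn {n : ℕ}
    (hw : ¬ IntegrableOn (gegWeight n) (Set.Icc (-1 : ℝ) 1)) (f : ℝ → ℝ) : gegInt n f = 0 := by
  rw [gegInt, integral_undef hw, inv_zero, zero_mul]

theorem gegInt_add (n : ℕ) {f g : ℝ → ℝ} (hf : ContinuousOn f (Set.Icc (-1) 1))
    (hg : ContinuousOn g (Set.Icc (-1) 1)) :
    gegInt n (fun t => f t + g t) = gegInt n f + gegInt n g := by
  by_cases hw : IntegrableOn (gegWeight n) (Set.Icc (-1 : ℝ) 1)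
  · simp only [gegInt, add_mul]
    rw [integral_add (hw.continuousOn_mul hf isCompact_Icc)
      (hw.continuousOn_mul hg isCompact_Icc), mul_add]
  · simp only [gegInt_eq_zero_of_not_integrableOn hw, add_zero]

theorem gegInt_const_mul (n : ℕ) (c : ℝ) (f : ℝ → ℝ) :
    gegInt n (fun t => c * f t) = c * gegInt n f := by
  simp only [gegInt, mul_assoc, integral_const_mul, mul_left_comm]

/-- The inner product in `L²(μ_n)` with a fixed polynomial `Q`, as a linear functional on
polynomials. It is linear for every `n`, since `gegInt n` is identically `0` when the weight is not
integrable. -/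
noncomputable def gegInner (n : ℕ) (Q : ℝ[X]) : ℝ[X] →ₗ[ℝ] ℝ where
  toFun p := gegInt n fun t => p.eval t * Q.eval t
  map_add' p q := by
    simp only [eval_add, add_mul]
    exact gegInt_add n (by fun_prop) (by fun_prop)
  map_smul' c p := by
    simp only [eval_smul, smul_eq_mul, mul_assoc, gegInt_const_mul, RingHom.id_apply]

theorem gegInner_apply (n : ℕ) (Q p : ℝ[X]) :
    gegInner n Q p = gegInt n fun t => p.eval t * Q.eval t :=
  rfl

theorem inLambda_iff_mem_degreeLT {n k : ℕ} {P : ℕ → ℝ[X]} {f : ℝ[X]} :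
    InLambda n k P f ↔
      f ∈ degreeLT ℝ (2 * k + 4) ∧ ∀ i : Fin 2, gegInner n (P (2 * k + i)) f = 0 := by
  rw [InLambda, degreeLT_succ_eq_degreeLE, mem_degreeLE, natDegree_le_iff_degree_le,
    Fin.forall_fin_two]
  rfl

theorem det_momentMatrix_gegInner_ne_zero_iff {ι : Type*} [Fintype ι] {n : ℕ} {Q : Fin 2 → ℝ[X]}
    {v : ι → ℝ} :
    (momentMatrix (fun i => gegInner n (Q i)) (nodal univ v ^ 2)).det ≠ 0 ↔
      gegInt n (fun t => t * (∏ i, (t - v i)) ^ 2 * (Q 0).eval t) *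
          gegInt n (fun t => (∏ i, (t - v i)) ^ 2 * (Q 1).eval t) ≠
        gegInt n (fun t => t * (∏ i, (t - v i)) ^ 2 * (Q 1).eval t) *
          gegInt n (fun t => (∏ i, (t - v i)) ^ 2 * (Q 0).eval t) := by
  rw [Matrix.det_fin_two, sub_ne_zero, ne_comm, mul_comm (momentMatrix _ _ 0 0)]
  simp [momentMatrix, gegInner_apply, eval_nodal]

end Gegenbauer

/-- existence and uniqueness of the Hermite interpolant in `Λ_{n,k}`. -/
theorem stmt_10 (n : ℕ) (hn : 2 ≤ n) (k : ℕ) (hk : 2 ≤ k)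
    (P : ℕ → Polynomial ℝ) (hP : IsGegenbauer n P)
    (β : Fin (k + 1) → ℝ) (hβmono : StrictMono β)
    (hβ0 : -1 < β 0) (hβlast : β (Fin.last k) < 1)
    (hdet :
      gegInt n (fun t => t * (∏ i, (t - β i)) ^ 2 * (P (2 * k)).eval t) *
          gegInt n (fun t => (∏ i, (t - β i)) ^ 2 * (P (2 * k + 1)).eval t) ≠
        gegInt n (fun t => t * (∏ i, (t - β i)) ^ 2 * (P (2 * k + 1)).eval t) *
          gegInt n (fun t => (∏ i, (t - β i)) ^ 2 * (P (2 * k)).eval t))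
    (h : ℝ → ℝ) (hh : AbsMonOn h) :
    ∃! f : Polynomial ℝ, InLambda n k P f ∧
      (∀ i, f.eval (β i) = h (β i)) ∧
      (∀ i, f.derivative.eval (β i) = derivWithin h (Set.Ico (-1 : ℝ) 1) (β i)) := by
  simpa [inLambda_iff_mem_degreeLT, and_assoc, mul_add] using
    stmt_10_general (φ := fun i : Fin 2 => gegInner n (P (2 * k + i))) hβmono.injective
      (det_momentMatrix_gegInner_ne_zero_iff.2 hdet) 0 (fun i => h (β i))
      fun i => derivWithin h (Set.Ico (-1) 1) (β i)
end
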